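/- arXiv:2308.00185 — 2 statements merged into one kernel-verified Lean document; each statement's English description precedes it below -/
import Mathlib

section
/- Let J_T ⊆ [0,5] be nonempty, closed, satisfy J_T = S₋₁(J_T) ∪ S₊₁(J_T), and be contained in every nonempty closed subset of [0,5] satisfying this set equation. Then the Hausdorff dimension of J_T satisfies 0.55161856837246 ≤ dim_H(J_T) ≤ 0.55161856837247. -/
open Set MeasureTheory

/-- The two inverse branches of the decimation polynomial `R(x) = x(5-x)`
associated to the Sierpiński triangle. -/
noncomputable def S (ε : ℝ) (x : ℝ) : ℝ := (5 + ε * Real.sqrt (25 - 4 * x)) / 2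

/-!
For a conformal iterated function system, a positive continuous function `f` on the phase space and
the transfer operator `L` with exponent `s`, the inequality `L f ≤ q * f` with `q < 1` makes the
sums of the `s`-th powers of the diameters of the cylinder sets decay geometrically, so `s` bounds
the dimension of the attractor from above; the inequality `L f ≥ q * f` with `q > 1` makes some
iterate of the system satisfy Moran's inequality `∑ rᵢ ^ s ≥ 1` with lower contraction ratios `rᵢ`,
so `s` bounds the dimension from below. Bounded distortion compares `L ^ n f` with these sums.

The inverse branches of `R` form such a system, and for it both inequalities hold for one
polynomial `f` in the coordinate `y = 4 * x - 10`, in which the branches are `y ↦ ±2 * √(15 - y)`.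
At an exponent between the two bounds, `L f` differs from `f` by a factor that is `1` up to `10⁻¹⁵`:
the logarithm of the factor is estimated at one point, and its derivative is a rational function,
which is bounded by the positivity of two polynomials with integer coefficients.
-/

open Filter Metric
open scoped ENNReal NNReal Topology

section HausdorffDimension

variable {X : Type*} [EMetricSpace X] {J : Set X}

theorem dimH_le_of_tendsto_sum_ediam_rpow {κ : ℕ → Type*} [∀ n, Fintype (κ n)]
    {t : ∀ n, κ n → Set X} {s : ℝ≥0} (hs : 0 < s) (hcover : ∀ n, J ⊆ ⋃ a, t n a)
    (hlim : Tendsto (fun n => ∑ a, ediam (t n a) ^ (s : ℝ)) atTop (𝓝 0)) : dimH J ≤ s := by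
  borelize X
  have hs' : (0 : ℝ) < s := hs
  have hsmall : Tendsto (fun n => (∑ a, ediam (t n a) ^ (s : ℝ)) ^ (s : ℝ)⁻¹) atTop (𝓝 0) := by
    simpa [ENNReal.zero_rpow_of_pos (inv_pos.2 hs')] using hlim.ennrpow_const (s : ℝ)⁻¹
  have hle : ∀ n a, ediam (t n a) ≤ (∑ a, ediam (t n a) ^ (s : ℝ)) ^ (s : ℝ)⁻¹ := fun n a =>
    (ENNReal.le_rpow_inv_iff hs').2 <|
      Finset.single_le_sum (f := fun a => ediam (t n a) ^ (s : ℝ)) (fun _ _ => zero_le)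
        (Finset.mem_univ a)
  refine dimH_le_of_hausdorffMeasure_ne_top (ne_top_of_le_ne_top ENNReal.zero_ne_top ?_)
  exact (Measure.hausdorffMeasure_le_liminf_sum s J _ hsmall t (.of_forall hle)
    (.of_forall hcover)).trans_eq hlim.liminf_eq

theorem exists_ediam_thickening_rpow_le (A : Set X) {s : ℝ} (hs : 0 ≤ s) {δ : ℝ≥0} (hδ : 0 < δ) :
    ∃ ρ : ℝ≥0, 0 < ρ ∧ ediam (thickening ρ A) ^ s ≤ ediam A ^ s + δ := by
  rcases eq_or_ne (ediam A ^ s) ⊤ with htop | hfin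
  · exact ⟨1, one_pos, by simp [htop]⟩
  have hlim : Tendsto (fun ρ : ℝ≥0 => (ediam A + 2 * ρ) ^ s) (𝓝[>] 0) (𝓝 (ediam A ^ s)) := by
    have h : Continuous fun ρ : ℝ≥0 => ediam A + 2 * ρ := by fun_prop (disch := simp)
    simpa using (h.tendsto 0).mono_left nhdsWithin_le_nhds |>.ennrpow_const s
  have hlt : ediam A ^ s < ediam A ^ s + δ := ENNReal.lt_add_right hfin (by simpa using hδ.ne')
  obtain ⟨ρ, hρ, hρ0⟩ := ((hlim.eventually_le_const hlt).and self_mem_nhdsWithin).exists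
  exact ⟨ρ, hρ0, (ENNReal.rpow_le_rpow (ediam_thickening_le ρ) hs).trans hρ⟩

-- Compactness reduces countable covers to finite ones: thickening the members of a countable cover
-- makes it open, at an arbitrarily small cost in the sum.
theorem le_dimH_of_le_sum_ediam_rpow {s : ℝ≥0} {c : ℝ≥0∞} (hc : c ≠ 0) (hJ : IsCompact J)
    (h : ∀ (T : Finset ℕ) (U : ℕ → Set X), J ⊆ ⋃ k ∈ T, U k →
      c ≤ ∑ k ∈ T, ediam (U k) ^ (s : ℝ)) : s ≤ dimH J := by
  rcases eq_zero_or_pos s with rfl | hs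
  · simp
  borelize X
  have hs' : (0 : ℝ) < s := hs
  refine le_dimH_of_hausdorffMeasure_ne_zero (ne_bot_of_le_ne_bot hc ?_)
  rw [Measure.hausdorffMeasure_apply]
  refine le_iSup₂_of_le 1 one_pos (le_iInf₂ fun t ht => le_iInf fun _ =>
    ENNReal.le_of_forall_pos_le_add fun ε hε _ => ?_)
  obtain ⟨δ, hδ0, hδ⟩ := ENNReal.exists_pos_sum_of_countable (ENNReal.coe_pos.2 hε).ne' ℕ
  choose ρ hρ0 hρ using fun k => exists_ediam_thickening_rpow_le (t k) hs'.le (hδ0 k)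
  obtain ⟨T, hT⟩ := hJ.elim_finite_subcover (fun k => thickening (ρ k) (t k))
    (fun _ => isOpen_thickening)
    (ht.trans (iUnion_mono fun k => self_subset_thickening (hρ0 k) _))
  calc c ≤ ∑ k ∈ T, ediam (thickening (ρ k) (t k)) ^ (s : ℝ) := h T _ hT
    _ ≤ ∑ k ∈ T, (ediam (t k) ^ (s : ℝ) + δ k) := Finset.sum_le_sum fun k _ => hρ k
    _ ≤ ∑' k, (ediam (t k) ^ (s : ℝ) + δ k) := ENNReal.sum_le_tsum T
    _ = ∑' k, ediam (t k) ^ (s : ℝ) + ∑' k, (δ k : ℝ≥0∞) := ENNReal.tsum_add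
    _ ≤ (∑' k, ⨆ _ : (t k).Nonempty, ediam (t k) ^ (s : ℝ)) + ε := by
      refine add_le_add (ENNReal.tsum_le_tsum fun k => ?_) hδ.le
      rcases (t k).eq_empty_or_nonempty with hk | hk
      · simp [hk, ENNReal.zero_rpow_of_pos hs']
      · simp [hk]

theorem mul_ediam_inter_preimage_le {g : X → X} {r : ℝ≥0∞}
    (hg : ∀ x ∈ J, ∀ y ∈ J, r * edist x y ≤ edist (g x) (g y)) (U : Set X) :
    r * ediam (J ∩ g ⁻¹' U) ≤ ediam U := by
  simp only [ediam, ENNReal.mul_iSup]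
  exact iSup₂_le fun x hx => iSup₂_le fun y hy =>
    (hg x hx.1 y hy.1).trans (edist_le_ediam_of_mem hx.2 hy.2)

theorem rpow_mul_rpow_le_sum_ediam {g : X → X} {r γ : ℝ≥0∞} {s : ℝ} (hs : 0 ≤ s)
    (hg : ∀ x ∈ J, ∀ y ∈ J, r * edist x y ≤ edist (g x) (g y)) {κ : Type*} {T : Finset κ}
    {U : κ → Set X} (hT : γ ^ s ≤ ∑ k ∈ T, ediam (J ∩ g ⁻¹' U k) ^ s) :
    r ^ s * γ ^ s ≤ ∑ k ∈ T, ediam (U k) ^ s := by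
  calc r ^ s * γ ^ s ≤ ∑ k ∈ T, r ^ s * ediam (J ∩ g ⁻¹' U k) ^ s := by
        rw [← Finset.mul_sum]
        gcongr
    _ ≤ ∑ k ∈ T, ediam (U k) ^ s := by
        gcongr with k
        rw [← ENNReal.mul_rpow_of_nonneg _ _ hs]
        exact ENNReal.rpow_le_rpow (mul_ediam_inter_preimage_le hg _) hs

variable {ι : Type*} {g : ι → X → X}

theorem exists_pos_forall_le_edist_of_pairwise_disjoint [Finite ι] (hJ : IsCompact J)
    (hcont : ∀ i, ContinuousOn (g i) J)
    (hdisj : Pairwise fun i j => Disjoint (g i '' J) (g j '' J)) :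
    ∃ γ : ℝ≥0, 0 < γ ∧ ∀ i j, i ≠ j → ∀ x ∈ J, ∀ y ∈ J, (γ : ℝ≥0∞) ≤ edist (g i x) (g j y) := by
  have hcompact i : IsCompact (g i '' J) := hJ.image_of_continuousOn (hcont i)
  have hpair : ∀ i j, ∀ᶠ γ : ℝ≥0 in 𝓝[>] 0,
      i ≠ j → ∀ x ∈ J, ∀ y ∈ J, (γ : ℝ≥0∞) ≤ edist (g i x) (g j y) := by
    intro i j
    by_cases hij : i = j
    · simp [hij]
    obtain ⟨r, hr0, hr⟩ :=
      exists_pos_forall_lt_edist (hcompact i) (hcompact j).isClosed (hdisj hij)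
    filter_upwards [Ioo_mem_nhdsGT hr0] with γ hγ _ x hx y hy
    exact (ENNReal.coe_le_coe.2 hγ.2.le).trans
      (hr _ (mem_image_of_mem _ hx) _ (mem_image_of_mem _ hy)).le
  obtain ⟨γ, hγ, hγ0⟩ :=
    ((eventually_all.2 fun i => eventually_all.2 (hpair i)).and self_mem_nhdsWithin).exists
  exact ⟨γ, hγ0, hγ⟩

variable [Fintype ι] [Nontrivial ι] {r : ι → ℝ≥0∞}

-- A member of the cover that meets two of the pieces `g i '' J` has diameter at least `γ`.
-- Otherwise the cover splits into covers of the pieces, and pulling these back gives smaller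
-- covers of `J`.
theorem rpow_le_sum_ediam_rpow_of_cover {s : ℝ} {γ : ℝ≥0∞} {κ : Type*} (hs : 0 ≤ s)
    (hne : J.Nonempty) (hmaps : ∀ i, MapsTo (g i) J J)
    (hg : ∀ i, ∀ x ∈ J, ∀ y ∈ J, r i * edist x y ≤ edist (g i x) (g i y))
    (hsep : ∀ i j, i ≠ j → ∀ x ∈ J, ∀ y ∈ J, γ ≤ edist (g i x) (g j y))
    (hsum : 1 ≤ ∑ i, r i ^ s) (T : Finset κ) (U : κ → Set X) (hU : J ⊆ ⋃ k ∈ T, U k) :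
    γ ^ s ≤ ∑ k ∈ T, ediam (U k) ^ s := by
  classical
  induction T using Finset.strongInduction generalizing U with | H T ih =>
  let T' (i : ι) : Finset κ := {k ∈ T | (g i '' J ∩ U k).Nonempty}
  have exists_mem : ∀ i, ∀ x ∈ J, ∃ k ∈ T' i, g i x ∈ U k := fun i x hx => by
    obtain ⟨k, hk, hxk⟩ := mem_iUnion₂.1 (hU (hmaps i hx))
    exact ⟨k, Finset.mem_filter.2 ⟨hk, _, mem_image_of_mem _ hx, hxk⟩, hxk⟩
  by_cases hdisj : ((Finset.univ : Finset ι) : Set ι).PairwiseDisjoint T'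
  · have hssub : ∀ i, T' i ⊂ T := fun i => by
      obtain ⟨j, hj⟩ := exists_ne i
      obtain ⟨k, hk, -⟩ := exists_mem j _ hne.some_mem
      refine (Finset.filter_subset _ T).ssubset_of_mem_notMem (Finset.filter_subset _ _ hk)
        fun hki => ?_
      exact Finset.disjoint_left.1 (hdisj (by simp) (by simp) hj) hk hki
    have hpiece : ∀ i, r i ^ s * γ ^ s ≤ ∑ k ∈ T' i, ediam (U k) ^ s := fun i =>
      rpow_mul_rpow_le_sum_ediam hs (hg i) <| ih _ (hssub i) _ fun x hx => by
        obtain ⟨k, hk, hxk⟩ := exists_mem i x hx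
        exact mem_iUnion₂.2 ⟨k, hk, hx, hxk⟩
    calc γ ^ s ≤ (∑ i, r i ^ s) * γ ^ s := le_mul_of_one_le_left' hsum
      _ = ∑ i, r i ^ s * γ ^ s := Finset.sum_mul ..
      _ ≤ ∑ i, ∑ k ∈ T' i, ediam (U k) ^ s := Finset.sum_le_sum fun i _ => hpiece i
      _ = ∑ k ∈ Finset.univ.biUnion T', ediam (U k) ^ s := (Finset.sum_biUnion hdisj).symm
      _ ≤ ∑ k ∈ T, ediam (U k) ^ s :=
        Finset.sum_le_sum_of_subset (Finset.biUnion_subset.2 fun i _ => Finset.filter_subset _ _)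
  · simp only [Set.PairwiseDisjoint, Set.Pairwise, Function.onFun, Finset.disjoint_left] at hdisj
    push Not at hdisj
    obtain ⟨i, -, j, -, hij, k, hi, hj⟩ := hdisj
    obtain ⟨hk, _, ⟨x, hx, rfl⟩, hxU⟩ := Finset.mem_filter.1 hi
    obtain ⟨-, _, ⟨y, hy, rfl⟩, hyU⟩ := Finset.mem_filter.1 hj
    calc γ ^ s ≤ ediam (U k) ^ s := ENNReal.rpow_le_rpow
          ((hsep i j hij x hx y hy).trans (edist_le_ediam_of_mem hxU hyU)) hs
      _ ≤ ∑ k ∈ T, ediam (U k) ^ s :=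
        Finset.single_le_sum (f := fun k => ediam (U k) ^ s) (fun _ _ => zero_le) hk

theorem le_dimH_of_one_le_sum_rpow {s : ℝ≥0} (hJ : IsCompact J) (hne : J.Nonempty)
    (hmaps : ∀ i, MapsTo (g i) J J) (hcont : ∀ i, ContinuousOn (g i) J)
    (hdisj : Pairwise fun i j => Disjoint (g i '' J) (g j '' J))
    (hg : ∀ i, ∀ x ∈ J, ∀ y ∈ J, r i * edist x y ≤ edist (g i x) (g i y))
    (hsum : 1 ≤ ∑ i, r i ^ (s : ℝ)) : s ≤ dimH J := by
  obtain ⟨γ, hγ0, hγ⟩ := exists_pos_forall_le_edist_of_pairwise_disjoint hJ hcont hdisj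
  have hγs : (γ : ℝ≥0∞) ^ (s : ℝ) ≠ 0 :=
    (ENNReal.rpow_pos (ENNReal.coe_pos.2 hγ0) ENNReal.coe_ne_top).ne'
  exact le_dimH_of_le_sum_ediam_rpow hγs hJ fun T U hU =>
    rpow_le_sum_ediam_rpow_of_cover s.2 hne hmaps hg hγ hsum T U hU

end HausdorffDimension

/-- A family of contractions of a subset `K` of a metric space that is conformal with
log-Lipschitz scaling factors: near `z` the map of index `i` changes distances by the factor
`scale i z`, up to an error `exp (± distortion * _)` that is linear in the distances to `z`. -/
structure ConformalIFS (ι : Type*) {X : Type*} [MetricSpace X] (K : Set X) where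
  map : ι → X → X
  scale : ι → X → ℝ
  ratio : ℝ≥0
  distortion : ℝ≥0
  ratio_lt_one : ratio < 1
  mapsTo : ∀ i, MapsTo (map i) K K
  scale_pos : ∀ i, ∀ x ∈ K, 0 < scale i x
  lipschitzOnWith : ∀ i, LipschitzOnWith ratio (map i) K
  dist_map_le : ∀ i, ∀ x ∈ K, ∀ y ∈ K, ∀ z ∈ K, dist (map i x) (map i y) ≤
    scale i z * Real.exp (distortion * (dist x z + dist y z)) * dist x y
  le_dist_map : ∀ i, ∀ x ∈ K, ∀ y ∈ K, ∀ z ∈ K,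
    scale i z * Real.exp (-(distortion * (dist x z + dist y z))) * dist x y ≤
      dist (map i x) (map i y)

namespace ConformalIFS

variable {ι X : Type*} [MetricSpace X] {K : Set X} (F : ConformalIFS ι K)

/-- The composition of the maps along a word, whose first letter acts first. -/
def mapWord : List ι → X → X
  | [], x => x
  | i :: w, x => mapWord w (F.map i x)

/-- The scaling factor of `mapWord w`, given by the chain rule. -/
def scaleWord : List ι → X → ℝ
  | [], _ => 1
  | i :: w, x => F.scale i x * scaleWord w (F.map i x)

/-- The distortion constant valid for all words, the sum of a geometric series. -/
noncomputable def wordDistortion : ℝ := F.distortion / (1 - F.ratio)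

theorem wordDistortion_nonneg : 0 ≤ F.wordDistortion :=
  div_nonneg F.distortion.2 (sub_nonneg.2 F.ratio_lt_one.le)

theorem ratio_mul_wordDistortion_add :
    F.ratio * F.wordDistortion + F.distortion = F.wordDistortion := by
  have h : (1 : ℝ) - F.ratio ≠ 0 := (sub_pos.2 (NNReal.coe_lt_one.2 F.ratio_lt_one)).ne'
  rw [wordDistortion]
  field_simp
  ring

theorem mapsTo_mapWord {J : Set X} (hJ : ∀ i, MapsTo (F.map i) J J) (w : List ι) :
    MapsTo (F.mapWord w) J J := by
  induction w with
  | nil => exact mapsTo_id J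
  | cons i w ih => exact ih.comp (hJ i)

theorem scaleWord_pos (w : List ι) {x : X} (hx : x ∈ K) : 0 < F.scaleWord w x := by
  induction w generalizing x with
  | nil => exact one_pos
  | cons i w ih => exact mul_pos (F.scale_pos i x hx) (ih (F.mapsTo i hx))

theorem wordDistortion_mul_dist_map_add_le (i : ι) {x y z : X} (hx : x ∈ K) (hy : y ∈ K)
    (hz : z ∈ K) :
    F.wordDistortion * (dist (F.map i x) (F.map i z) + dist (F.map i y) (F.map i z)) +
      F.distortion * (dist x z + dist y z) ≤ F.wordDistortion * (dist x z + dist y z) := by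
  have hxz := (F.lipschitzOnWith i).dist_le_mul x hx z hz
  have hyz := (F.lipschitzOnWith i).dist_le_mul y hy z hz
  calc _ ≤ F.wordDistortion * (F.ratio * dist x z + F.ratio * dist y z) +
        F.distortion * (dist x z + dist y z) := by
        gcongr
        exact F.wordDistortion_nonneg
    _ = (F.ratio * F.wordDistortion + F.distortion) * (dist x z + dist y z) := by ring
    _ = _ := by rw [ratio_mul_wordDistortion_add]

theorem dist_mapWord_le (w : List ι) {x y z : X} (hx : x ∈ K) (hy : y ∈ K) (hz : z ∈ K) :
    dist (F.mapWord w x) (F.mapWord w y) ≤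
      F.scaleWord w z * Real.exp (F.wordDistortion * (dist x z + dist y z)) * dist x y := by
  induction w generalizing x y z with
  | nil =>
    have h : 0 ≤ F.wordDistortion * (dist x z + dist y z) :=
      mul_nonneg F.wordDistortion_nonneg (by positivity)
    simpa [mapWord, scaleWord] using le_mul_of_one_le_left dist_nonneg (Real.one_le_exp h)
  | cons i w ih =>
    have hscale := (F.scaleWord_pos w (F.mapsTo i hz)).le
    have hscale' := (F.scale_pos i z hz).le
    calc dist (F.mapWord w (F.map i x)) (F.mapWord w (F.map i y))
        ≤ F.scaleWord w (F.map i z) * Real.exp (F.wordDistortion *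
            (dist (F.map i x) (F.map i z) + dist (F.map i y) (F.map i z))) *
            (F.scale i z * Real.exp (F.distortion * (dist x z + dist y z)) * dist x y) := by
          refine (ih (F.mapsTo i hx) (F.mapsTo i hy) (F.mapsTo i hz)).trans ?_
          gcongr
          exact F.dist_map_le i x hx y hy z hz
      _ = F.scale i z * F.scaleWord w (F.map i z) * Real.exp (F.wordDistortion *
            (dist (F.map i x) (F.map i z) + dist (F.map i y) (F.map i z)) +
              F.distortion * (dist x z + dist y z)) * dist x y := by
          rw [Real.exp_add]
          ring
      _ ≤ F.scaleWord (i :: w) z * Real.exp (F.wordDistortion * (dist x z + dist y z)) *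
            dist x y := by
          rw [scaleWord]
          gcongr
          exact F.wordDistortion_mul_dist_map_add_le i hx hy hz

theorem le_dist_mapWord (w : List ι) {x y z : X} (hx : x ∈ K) (hy : y ∈ K) (hz : z ∈ K) :
    F.scaleWord w z * Real.exp (-(F.wordDistortion * (dist x z + dist y z))) * dist x y ≤
      dist (F.mapWord w x) (F.mapWord w y) := by
  induction w generalizing x y z with
  | nil =>
    have h : 0 ≤ F.wordDistortion * (dist x z + dist y z) :=
      mul_nonneg F.wordDistortion_nonneg (by positivity)
    simpa [mapWord, scaleWord] using
      mul_le_of_le_one_left dist_nonneg (Real.exp_le_one_iff.2 (neg_nonpos.2 h))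
  | cons i w ih =>
    have hscale := (F.scaleWord_pos w (F.mapsTo i hz)).le
    have hscale' := (F.scale_pos i z hz).le
    calc F.scaleWord (i :: w) z * Real.exp (-(F.wordDistortion * (dist x z + dist y z))) *
            dist x y
        ≤ F.scale i z * F.scaleWord w (F.map i z) * Real.exp (-(F.wordDistortion *
            (dist (F.map i x) (F.map i z) + dist (F.map i y) (F.map i z)) +
              F.distortion * (dist x z + dist y z))) * dist x y := by
          rw [scaleWord]
          gcongr
          exact F.wordDistortion_mul_dist_map_add_le i hx hy hz
      _ = F.scaleWord w (F.map i z) * Real.exp (-(F.wordDistortion *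
            (dist (F.map i x) (F.map i z) + dist (F.map i y) (F.map i z)))) *
            (F.scale i z * Real.exp (-(F.distortion * (dist x z + dist y z))) * dist x y) := by
          rw [neg_add, Real.exp_add]
          ring
      _ ≤ dist (F.mapWord w (F.map i x)) (F.mapWord w (F.map i y)) := by
          refine le_trans ?_ (ih (F.mapsTo i hx) (F.mapsTo i hy) (F.mapsTo i hz))
          gcongr
          exact F.le_dist_map i x hx y hy z hz

theorem exists_forall_dist_mapWord_le (hK : Bornology.IsBounded K) :
    ∃ D > 0, ∀ w, ∀ x ∈ K, ∀ y ∈ K, ∀ z ∈ K,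
      dist (F.mapWord w x) (F.mapWord w y) ≤ F.scaleWord w z * D * dist x y ∧
      F.scaleWord w z * D⁻¹ * dist x y ≤ dist (F.mapWord w x) (F.mapWord w y) := by
  refine ⟨Real.exp (F.wordDistortion * (diam K + diam K)), Real.exp_pos _,
    fun w x hx y hy z hz => ?_⟩
  have hscale := (F.scaleWord_pos w hz).le
  have hA := F.wordDistortion_nonneg
  have hxz := dist_le_diam_of_mem hK hx hz
  have hyz := dist_le_diam_of_mem hK hy hz
  refine ⟨(F.dist_mapWord_le w hx hy hz).trans (by gcongr), ?_⟩
  rw [← Real.exp_neg]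
  exact le_trans (by gcongr) (F.le_dist_mapWord w hx hy hz)

theorem injOn_mapWord (w : List ι) : InjOn (F.mapWord w) K := fun x hx y hy hxy => by
  have h := F.le_dist_mapWord w hx hy hx
  rw [hxy, dist_self (F.mapWord w y)] at h
  exact dist_le_zero.1 (nonpos_of_mul_nonpos_right h
    (mul_pos (F.scaleWord_pos w hx) (Real.exp_pos _)))

theorem eq_of_mapWord_eq_mapWord
    (hdisj : Pairwise fun i j => Disjoint (F.map i '' K) (F.map j '' K))
    {w w' : List ι} (hlen : w.length = w'.length) {x y : X} (hx : x ∈ K) (hy : y ∈ K)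
    (h : F.mapWord w x = F.mapWord w' y) : w = w' := by
  induction w generalizing w' x y with
  | nil => exact (List.length_eq_zero_iff.1 hlen.symm).symm
  | cons i w ih =>
    obtain ⟨j, w', rfl⟩ := List.exists_cons_of_length_eq_add_one hlen.symm
    obtain rfl : w = w' := ih (by simpa using hlen) (F.mapsTo i hx) (F.mapsTo j hy) h
    have hij : F.map i x = F.map j y := F.injOn_mapWord w (F.mapsTo i hx) (F.mapsTo j hy) h
    by_contra hne
    have hij' : i ≠ j := fun h => hne (congrArg (· :: w) h)
    exact disjoint_left.1 (hdisj hij') (mem_image_of_mem _ hx) ⟨y, hy, hij.symm⟩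

theorem disjoint_image_mapWord
    (hdisj : Pairwise fun i j => Disjoint (F.map i '' K) (F.map j '' K)) {n : ℕ}
    {w w' : Fin n → ι} (hw : w ≠ w') :
    Disjoint (F.mapWord (List.ofFn w) '' K) (F.mapWord (List.ofFn w') '' K) := by
  rw [disjoint_left]
  rintro _ ⟨x, hx, rfl⟩ ⟨y, hy, hxy⟩
  exact hw (List.ofFn_injective (F.eq_of_mapWord_eq_mapWord hdisj (by simp) hx hy hxy.symm))

theorem continuousOn_mapWord (w : List ι) : ContinuousOn (F.mapWord w) K := by
  induction w with
  | nil => exact continuousOn_id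
  | cons i w ih => exact ih.comp (F.lipschitzOnWith i).continuousOn (F.mapsTo i)

theorem subset_iUnion_mapWord {J : Set X} (hJ : J ⊆ ⋃ i, F.map i '' J) (n : ℕ) :
    J ⊆ ⋃ w : Fin n → ι, F.mapWord (List.ofFn w) '' J := by
  induction n with
  | zero => exact fun x hx => mem_iUnion.2 ⟨Fin.elim0, x, hx, rfl⟩
  | succ n ih =>
    intro x hx
    obtain ⟨w, y, hy, rfl⟩ := mem_iUnion.1 (ih hx)
    obtain ⟨i, z, hz, rfl⟩ := mem_iUnion.1 (hJ hy)
    exact mem_iUnion.2 ⟨Fin.cons i w, z, hz, by simp [mapWord]⟩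

section Transfer

variable [Fintype ι] {s q : ℝ} {f : X → ℝ}

/-- The Ruelle transfer operator of a conformal iterated function system, with exponent `s`. -/
noncomputable def transfer (s : ℝ) (f : X → ℝ) (x : X) : ℝ :=
  ∑ i, F.scale i x ^ s * f (F.map i x)

theorem transfer_iterate_apply (n : ℕ) {x : X} (hx : x ∈ K) :
    (F.transfer s)^[n] f x =
      ∑ w : Fin n → ι, F.scaleWord (List.ofFn w) x ^ s * f (F.mapWord (List.ofFn w) x) := by
  induction n generalizing x with
  | zero => simp [scaleWord, mapWord]
  | succ n ih =>
    rw [Function.iterate_succ_apply', transfer, ← (Fin.consEquiv fun _ => ι).sum_comp,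
      Fintype.sum_prod_type]
    refine Finset.sum_congr rfl fun i _ => ?_
    rw [ih (F.mapsTo i hx), Finset.mul_sum]
    refine Finset.sum_congr rfl fun w _ => ?_
    simp only [Fin.consEquiv, Equiv.coe_fn_mk, List.ofFn_cons, scaleWord, mapWord]
    rw [Real.mul_rpow (F.scale_pos i x hx).le (F.scaleWord_pos _ (F.mapsTo i hx)).le, mul_assoc]

theorem transfer_const_mul (c : ℝ) (x : X) :
    F.transfer s (fun y => c * f y) x = c * F.transfer s f x := by
  simp only [transfer, Finset.mul_sum, mul_left_comm]

theorem transfer_mono {g : X → ℝ} (hfg : ∀ x ∈ K, f x ≤ g x) {x : X} (hx : x ∈ K) :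
    F.transfer s f x ≤ F.transfer s g x :=
  Finset.sum_le_sum fun i _ => mul_le_mul_of_nonneg_left (hfg _ (F.mapsTo i hx))
    (Real.rpow_nonneg (F.scale_pos i x hx).le s)

theorem transfer_iterate_le (hq : 0 ≤ q) (hf : ∀ x ∈ K, F.transfer s f x ≤ q * f x) (n : ℕ) :
    ∀ x ∈ K, (F.transfer s)^[n] f x ≤ q ^ n * f x := by
  induction n with
  | zero => simp
  | succ n ih =>
    intro x hx
    calc (F.transfer s)^[n + 1] f x = F.transfer s ((F.transfer s)^[n] f) x := by
          rw [Function.iterate_succ_apply']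
      _ ≤ q ^ n * F.transfer s f x := (F.transfer_mono ih hx).trans_eq (F.transfer_const_mul _ x)
      _ ≤ q ^ n * (q * f x) := by gcongr; exact hf x hx
      _ = q ^ (n + 1) * f x := by ring

theorem le_transfer_iterate (hq : 0 ≤ q) (hf : ∀ x ∈ K, q * f x ≤ F.transfer s f x) (n : ℕ) :
    ∀ x ∈ K, q ^ n * f x ≤ (F.transfer s)^[n] f x := by
  induction n with
  | zero => simp
  | succ n ih =>
    intro x hx
    calc q ^ (n + 1) * f x = q ^ n * (q * f x) := by ring
      _ ≤ q ^ n * F.transfer s f x := by gcongr; exact hf x hx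
      _ ≤ F.transfer s ((F.transfer s)^[n] f) x :=
        (F.transfer_const_mul _ x).symm.trans_le (F.transfer_mono ih hx)
      _ = (F.transfer s)^[n + 1] f x := by rw [Function.iterate_succ_apply']

theorem sum_scaleWord_rpow_le {m : ℝ} (hm : 0 < m) (hfm : ∀ x ∈ K, m ≤ f x) (hq : 0 ≤ q)
    (hf : ∀ x ∈ K, F.transfer s f x ≤ q * f x) (n : ℕ) {x : X} (hx : x ∈ K) :
    ∑ w : Fin n → ι, F.scaleWord (List.ofFn w) x ^ s ≤ q ^ n * f x / m := by
  rw [le_div_iff₀ hm, Finset.sum_mul]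
  refine le_trans (Finset.sum_le_sum fun w _ => ?_)
    ((F.transfer_iterate_apply n hx).symm.trans_le (F.transfer_iterate_le hq hf n x hx))
  exact mul_le_mul_of_nonneg_left (hfm _ (F.mapsTo_mapWord F.mapsTo _ hx))
    (Real.rpow_nonneg (F.scaleWord_pos _ hx).le s)

theorem le_sum_scaleWord_rpow {M : ℝ} (hM : 0 < M) (hfM : ∀ x ∈ K, f x ≤ M) (hq : 0 ≤ q)
    (hf : ∀ x ∈ K, q * f x ≤ F.transfer s f x) (n : ℕ) {x : X} (hx : x ∈ K) :
    q ^ n * f x / M ≤ ∑ w : Fin n → ι, F.scaleWord (List.ofFn w) x ^ s := by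
  rw [div_le_iff₀ hM, Finset.sum_mul]
  refine le_trans ((F.le_transfer_iterate hq hf n x hx).trans_eq (F.transfer_iterate_apply n hx))
    (Finset.sum_le_sum fun w _ => ?_)
  exact mul_le_mul_of_nonneg_left (hfM _ (F.mapsTo_mapWord F.mapsTo _ hx))
    (Real.rpow_nonneg (F.scaleWord_pos _ hx).le s)

theorem exists_forall_sum_ediam_mapWord_rpow_le (hK : Bornology.IsBounded K) (hs : 0 ≤ s) {x₀ : X}
    (hx₀ : x₀ ∈ K) : ∃ C : ℝ, ∀ n, ∑ w : Fin n → ι, ediam (F.mapWord (List.ofFn w) '' K) ^ s ≤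
      ENNReal.ofReal ((∑ w : Fin n → ι, F.scaleWord (List.ofFn w) x₀ ^ s) * C) := by
  obtain ⟨D, hD0, hD⟩ := F.exists_forall_dist_mapWord_le hK
  have hL0 : 0 ≤ D * diam K := mul_nonneg hD0.le diam_nonneg
  have hdiam : ∀ w, ediam (F.mapWord w '' K) ≤
      ENNReal.ofReal (F.scaleWord w x₀ * (D * diam K)) := by
    refine fun w => ediam_image_le_iff.2 fun x hx y hy => ?_
    have hscale := (F.scaleWord_pos w hx₀).le
    rw [edist_dist, ← mul_assoc]
    refine ENNReal.ofReal_le_ofReal (((hD w x hx y hy x₀ hx₀).1).trans ?_)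
    gcongr
    exact dist_le_diam_of_mem hK hx hy
  refine ⟨(D * diam K) ^ s, fun n => ?_⟩
  rw [Finset.sum_mul, ENNReal.ofReal_sum_of_nonneg fun w _ =>
    mul_nonneg (Real.rpow_nonneg (F.scaleWord_pos _ hx₀).le s) (Real.rpow_nonneg hL0 s)]
  gcongr with w
  have hscale := (F.scaleWord_pos (List.ofFn w) hx₀).le
  rw [← Real.mul_rpow hscale hL0, ← ENNReal.ofReal_rpow_of_nonneg (mul_nonneg hscale hL0) hs]
  exact ENNReal.rpow_le_rpow (hdiam _) hs

theorem dimH_le_of_transfer_le (hK : IsCompact K) (hcont : ContinuousOn f K)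
    (hpos : ∀ x ∈ K, 0 < f x) (hs : 0 < s) (hq : 0 ≤ q) (hq1 : q < 1)
    (hf : ∀ x ∈ K, F.transfer s f x ≤ q * f x) {J : Set X} (hJK : J ⊆ K)
    (hJ : J ⊆ ⋃ i, F.map i '' J) : dimH J ≤ ENNReal.ofReal s := by
  rcases J.eq_empty_or_nonempty with rfl | ⟨x₀, hx₀⟩
  · simp
  obtain ⟨z, hz, hzmin⟩ := hK.exists_isMinOn ⟨x₀, hJK hx₀⟩ hcont
  obtain ⟨C, hC⟩ := F.exists_forall_sum_ediam_mapWord_rpow_le hK.isBounded hs.le (hJK hx₀)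
  have hlim : Tendsto (fun n : ℕ => (∑ w : Fin n → ι, F.scaleWord (List.ofFn w) x₀ ^ s) * C)
      atTop (𝓝 0) := by
    have hpow : Tendsto (fun n : ℕ => q ^ n * f x₀ / f z) atTop (𝓝 0) := by
      simpa using ((tendsto_pow_atTop_nhds_zero_of_lt_one hq hq1).mul_const _).div_const (f z)
    simpa using (squeeze_zero
      (fun n => Finset.sum_nonneg fun w _ => Real.rpow_nonneg (F.scaleWord_pos _ (hJK hx₀)).le s)
      (fun n => F.sum_scaleWord_rpow_le (hpos z hz) hzmin hq hf n (hJK hx₀)) hpow).mul_const C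
  lift s to ℝ≥0 using hs.le
  rw [ENNReal.ofReal_coe_nnreal]
  refine dimH_le_of_tendsto_sum_ediam_rpow (by exact_mod_cast hs)
    (fun n => (F.subset_iUnion_mapWord hJ n).trans (iUnion_mono fun w => image_mono hJK)) ?_
  exact tendsto_of_tendsto_of_tendsto_of_le_of_le tendsto_const_nhds
    (by simpa using ENNReal.tendsto_ofReal hlim) (fun _ => zero_le) hC

theorem exists_one_le_sum_scaleWord_mul_rpow {M : ℝ} (hM : 0 < M) (hfM : ∀ x ∈ K, f x ≤ M)
    (hq : 1 < q) (hf : ∀ x ∈ K, q * f x ≤ F.transfer s f x) {x₀ : X} (hx₀ : x₀ ∈ K)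
    (hfx₀ : 0 < f x₀) {c : ℝ} (hc : 0 < c) :
    ∃ n ≠ 0, 1 ≤ ∑ w : Fin n → ι, (F.scaleWord (List.ofFn w) x₀ * c) ^ s := by
  have hlim : Tendsto (fun n : ℕ => q ^ n * (f x₀ / M * c ^ s)) atTop atTop :=
    (tendsto_pow_atTop_atTop_of_one_lt hq).atTop_mul_const
      (mul_pos (div_pos hfx₀ hM) (Real.rpow_pos_of_pos hc s))
  obtain ⟨n, hn, hn0⟩ := ((hlim.eventually_ge_atTop 1).and (eventually_ne_atTop 0)).exists
  refine ⟨n, hn0, ?_⟩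
  calc 1 ≤ q ^ n * f x₀ / M * c ^ s := by rwa [mul_div_assoc, mul_assoc]
    _ ≤ (∑ w : Fin n → ι, F.scaleWord (List.ofFn w) x₀ ^ s) * c ^ s := by
      gcongr
      exact F.le_sum_scaleWord_rpow hM hfM (zero_le_one.trans hq.le) hf n hx₀
    _ = ∑ w : Fin n → ι, (F.scaleWord (List.ofFn w) x₀ * c) ^ s := by
      rw [Finset.sum_mul]
      exact Finset.sum_congr rfl fun w _ => (Real.mul_rpow (F.scaleWord_pos _ hx₀).le hc.le).symm

theorem le_dimH_of_le_transfer [Nontrivial ι] (hK : IsCompact K) (hcont : ContinuousOn f K)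
    (hpos : ∀ x ∈ K, 0 < f x) (hs : 0 ≤ s) (hq : 1 < q)
    (hf : ∀ x ∈ K, q * f x ≤ F.transfer s f x)
    (hdisj : Pairwise fun i j => Disjoint (F.map i '' K) (F.map j '' K)) {J : Set X}
    (hJK : J ⊆ K) (hJc : IsCompact J) (hne : J.Nonempty) (hJ : ∀ i, MapsTo (F.map i) J J) :
    ENNReal.ofReal s ≤ dimH J := by
  obtain ⟨x₀, hx₀⟩ := hne
  obtain ⟨z, hz, hzmax⟩ := hK.exists_isMaxOn ⟨x₀, hJK hx₀⟩ hcont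
  obtain ⟨D, hD0, hD⟩ := F.exists_forall_dist_mapWord_le hK.isBounded
  obtain ⟨n, hn0, hsum⟩ := F.exists_one_le_sum_scaleWord_mul_rpow (hpos z hz) hzmax hq hf
    (hJK hx₀) (hpos _ (hJK hx₀)) (inv_pos.2 hD0)
  have : NeZero n := ⟨hn0⟩
  have : Nontrivial (Fin n → ι) := Function.nontrivial
  have hr : ∀ w, 0 < F.scaleWord w x₀ * D⁻¹ := fun w =>
    mul_pos (F.scaleWord_pos w (hJK hx₀)) (inv_pos.2 hD0)
  lift s to ℝ≥0 using hs
  rw [ENNReal.ofReal_coe_nnreal]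
  refine le_dimH_of_one_le_sum_rpow (g := fun w : Fin n → ι => F.mapWord (List.ofFn w))
    (r := fun w => ENNReal.ofReal (F.scaleWord (List.ofFn w) x₀ * D⁻¹)) hJc ⟨x₀, hx₀⟩
    (fun w => F.mapsTo_mapWord hJ _) (fun w => (F.continuousOn_mapWord _).mono hJK)
    (fun w w' hw => (F.disjoint_image_mapWord hdisj hw).mono (image_mono hJK) (image_mono hJK))
    (fun w x hx y hy => ?_) ?_
  · rw [edist_dist, edist_dist, ← ENNReal.ofReal_mul (hr _).le]
    exact ENNReal.ofReal_le_ofReal (hD _ x (hJK hx) y (hJK hy) x₀ (hJK hx₀)).2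
  · have hr_rpow : ∀ w : Fin n → ι, ENNReal.ofReal (F.scaleWord (List.ofFn w) x₀ * D⁻¹) ^ (s : ℝ) =
        ENNReal.ofReal ((F.scaleWord (List.ofFn w) x₀ * D⁻¹) ^ (s : ℝ)) := fun w =>
      ENNReal.ofReal_rpow_of_nonneg (hr _).le s.2
    rw [Finset.sum_congr rfl fun w _ => hr_rpow w,
      ← ENNReal.ofReal_sum_of_nonneg fun w _ => Real.rpow_nonneg (hr _).le _]
    exact ENNReal.one_le_ofReal.2 hsum

end Transfer

end ConformalIFS

section InverseBranches

variable {ε x y z : ℝ}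

theorem sqrt_mem_Icc (hx : x ∈ Icc 0 5) : √(25 - 4 * x) ∈ Icc √5 5 :=
  ⟨Real.sqrt_le_sqrt (by linarith [hx.2]), by
    rw [Real.sqrt_le_left (by norm_num)]
    linarith [hx.1]⟩

theorem two_lt_sqrt (hx : x ∈ Icc 0 5) : 2 < √(25 - 4 * x) :=
  lt_of_lt_of_le (by rw [Real.lt_sqrt] <;> norm_num) (sqrt_mem_Icc hx).1

theorem mapsTo_S (hε : |ε| = 1) : MapsTo (S ε) (Icc 0 5) (Icc 0 5) := fun x hx => by
  have h : |ε * √(25 - 4 * x)| ≤ 5 := by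
    rw [abs_mul, hε, one_mul, abs_of_nonneg (Real.sqrt_nonneg _)]
    exact (sqrt_mem_Icc hx).2
  have := abs_le.1 h
  constructor <;> rw [S] <;> linarith

theorem dist_S_mul_sqrt_add_sqrt (hε : |ε| = 1) (hx : x ∈ Icc 0 5) (hy : y ∈ Icc 0 5) :
    dist (S ε x) (S ε y) * (√(25 - 4 * x) + √(25 - 4 * y)) = 2 * dist x y := by
  have hX := Real.sq_sqrt (show 0 ≤ 25 - 4 * x by linarith [hx.2])
  have hY := Real.sq_sqrt (show 0 ≤ 25 - 4 * y by linarith [hy.2])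
  have hS : S ε x - S ε y = ε * ((√(25 - 4 * x) - √(25 - 4 * y)) / 2) := by
    simp only [S]
    ring
  have hprod : (√(25 - 4 * x) - √(25 - 4 * y)) / 2 * (√(25 - 4 * x) + √(25 - 4 * y)) =
      -2 * (x - y) := by linear_combination (hX - hY) / 2
  rw [Real.dist_eq, Real.dist_eq, hS, abs_mul, hε, one_mul]
  nth_rewrite 1 [← abs_of_nonneg (show 0 ≤ √(25 - 4 * x) + √(25 - 4 * y) by positivity)]
  rw [← abs_mul, hprod, abs_mul]
  norm_num

theorem lipschitzOnWith_S (hε : |ε| = 1) : LipschitzOnWith (1 / 2) (S ε) (Icc 0 5) := by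
  refine LipschitzOnWith.of_dist_le_mul fun x hx y hy => ?_
  have hprod := dist_S_mul_sqrt_add_sqrt hε hx hy
  have hsqrt : 4 ≤ √(25 - 4 * x) + √(25 - 4 * y) := by linarith [two_lt_sqrt hx, two_lt_sqrt hy]
  have := mul_le_mul_of_nonneg_left hsqrt (dist_nonneg (x := S ε x) (y := S ε y))
  push_cast
  linarith

theorem sqrt_le_exp_dist_mul_sqrt (hx : x ∈ Icc 0 5) :
    √(25 - 4 * z) ≤ Real.exp (2 / 5 * dist x z) * √(25 - 4 * x) := by
  have hx5 : 5 ≤ 25 - 4 * x := by linarith [hx.2]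
  refine Real.sqrt_le_iff.2 ⟨by positivity, ?_⟩
  calc 25 - 4 * z ≤ 4 / 5 * dist x z * (25 - 4 * x) + (25 - 4 * x) := by
        nlinarith [le_abs_self (x - z), Real.dist_eq x z, dist_nonneg (x := x) (y := z)]
    _ = (4 / 5 * dist x z + 1) * (25 - 4 * x) := by ring
    _ ≤ Real.exp (4 / 5 * dist x z) * (25 - 4 * x) := by
        gcongr
        exact Real.add_one_le_exp _
    _ = (Real.exp (2 / 5 * dist x z) * √(25 - 4 * x)) ^ 2 := by
        rw [mul_pow, Real.sq_sqrt (by linarith), ← Real.exp_nat_mul]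
        ring_nf

theorem dist_S_le (hε : |ε| = 1) (hx : x ∈ Icc 0 5) (hy : y ∈ Icc 0 5) (hz : z ∈ Icc 0 5) :
    dist (S ε x) (S ε y) ≤
      (√(25 - 4 * z))⁻¹ * Real.exp (2 / 5 * (dist x z + dist y z)) * dist x y := by
  have hX : √(25 - 4 * z) ≤ Real.exp (2 / 5 * (dist x z + dist y z)) * √(25 - 4 * x) :=
    (sqrt_le_exp_dist_mul_sqrt hx).trans (by gcongr; simp)
  have hY : √(25 - 4 * z) ≤ Real.exp (2 / 5 * (dist x z + dist y z)) * √(25 - 4 * y) :=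
    (sqrt_le_exp_dist_mul_sqrt hy).trans (by gcongr; simp)
  rw [mul_assoc, le_inv_mul_iff₀ (two_pos.trans (two_lt_sqrt hz))]
  linear_combination (dist (S ε x) (S ε y) / 2) * (hX + hY) +
    (Real.exp (2 / 5 * (dist x z + dist y z)) / 2) * dist_S_mul_sqrt_add_sqrt hε hx hy

theorem le_dist_S (hε : |ε| = 1) (hx : x ∈ Icc 0 5) (hy : y ∈ Icc 0 5) (hz : z ∈ Icc 0 5) :
    (√(25 - 4 * z))⁻¹ * Real.exp (-(2 / 5 * (dist x z + dist y z))) * dist x y ≤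
      dist (S ε x) (S ε y) := by
  have hX : √(25 - 4 * x) ≤ Real.exp (2 / 5 * (dist x z + dist y z)) * √(25 - 4 * z) :=
    (sqrt_le_exp_dist_mul_sqrt hz).trans (by gcongr; simp [dist_comm])
  have hY : √(25 - 4 * y) ≤ Real.exp (2 / 5 * (dist x z + dist y z)) * √(25 - 4 * z) :=
    (sqrt_le_exp_dist_mul_sqrt hz).trans (by gcongr; simp [dist_comm])
  rw [mul_assoc, inv_mul_le_iff₀ (two_pos.trans (two_lt_sqrt hz)), Real.exp_neg,
    inv_mul_le_iff₀ (Real.exp_pos _)]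
  linear_combination (dist (S ε x) (S ε y) / 2) * (hX + hY) -
    dist_S_mul_sqrt_add_sqrt hε hx hy / 2

theorem abs_intCast_units (ε : ℤˣ) : |((ε : ℤ) : ℝ)| = 1 := by
  rcases Int.units_eq_one_or ε with rfl | rfl <;> simp

/-- The inverse branches of `x ↦ x * (5 - x)` as a conformal iterated function system, indexed by
their signs. Since `(S ε)' = -ε / √(25 - 4 x)`, the scaling factors do not depend on the branch. -/
noncomputable def decimationIFS : ConformalIFS ℤˣ (Icc (0 : ℝ) 5) where
  map ε := S (ε : ℤ)
  scale _ x := (√(25 - 4 * x))⁻¹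
  ratio := 1 / 2
  distortion := 2 / 5
  ratio_lt_one := by norm_num
  mapsTo ε := mapsTo_S (abs_intCast_units ε)
  scale_pos _ _ hx := inv_pos.2 (two_pos.trans (two_lt_sqrt hx))
  lipschitzOnWith ε := lipschitzOnWith_S (abs_intCast_units ε)
  dist_map_le ε _ hx _ hy _ hz := by simpa using dist_S_le (abs_intCast_units ε) hx hy hz
  le_dist_map ε _ hx _ hy _ hz := by simpa using le_dist_S (abs_intCast_units ε) hx hy hz

theorem disjoint_image_S : Disjoint (S (-1) '' Icc 0 5) (S 1 '' Icc 0 5) := by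
  rw [disjoint_left]
  rintro _ ⟨x, hx, rfl⟩ ⟨y, hy, hxy⟩
  simp only [S] at hxy
  linarith [two_lt_sqrt hx, two_lt_sqrt hy]

theorem pairwise_disjoint_image_decimationIFS :
    Pairwise fun ε δ =>
      Disjoint (decimationIFS.map ε '' Icc 0 5) (decimationIFS.map δ '' Icc 0 5) := by
  intro ε δ hεδ
  rcases Int.units_eq_one_or ε with rfl | rfl <;> rcases Int.units_eq_one_or δ with rfl | rfl
  · exact absurd rfl hεδ
  · simpa [decimationIFS] using disjoint_image_S.symm
  · simpa [decimationIFS] using disjoint_image_S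
  · exact absurd rfl hεδ

theorem decimationIFS_transfer_apply (s : ℝ) (f : ℝ → ℝ) (x : ℝ) :
    decimationIFS.transfer s f x = (√(25 - 4 * x))⁻¹ ^ s * (f (S 1 x) + f (S (-1) x)) := by
  simp [ConformalIFS.transfer, decimationIFS, mul_add, UnitsInt.univ]

theorem iUnion_decimationIFS_image (A : Set ℝ) :
    ⋃ ε, decimationIFS.map ε '' A = S (-1) '' A ∪ S 1 '' A := by
  ext x
  simp only [mem_iUnion, mem_union, decimationIFS]
  constructor
  · rintro ⟨ε, hx⟩
    rcases Int.units_eq_one_or ε with rfl | rfl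
    · exact .inr (by simpa using hx)
    · exact .inl (by simpa using hx)
  · rintro (hx | hx)
    · exact ⟨-1, by simpa using hx⟩
    · exact ⟨1, by simpa using hx⟩

end InverseBranches

namespace IntPoly

/-- The value at `x` of the polynomial with coefficient list `p`, constant coefficient first.
Polynomials are represented by such lists so that inequalities between the coefficients of
large composite expressions can be decided by kernel computation. -/
noncomputable def eval : List ℤ → ℝ → ℝ
  | [], _ => 0
  | c :: p, x => c + x * eval p x

/-- Coefficients of the sum of two polynomials. -/
def add : List ℤ → List ℤ → List ℤ
  | [], q => q
  | c :: p, [] => c :: p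
  | c :: p, d :: q => (c + d) :: add p q

/-- Coefficients of a constant multiple of a polynomial. -/
def smul (a : ℤ) (p : List ℤ) : List ℤ := p.map (a * ·)

/-- Coefficients of the product of two polynomials. -/
def mul : List ℤ → List ℤ → List ℤ
  | [], _ => []
  | c :: p, q => add (smul c q) (0 :: mul p q)

/-- Coefficients of the derivative of a polynomial, by the product rule for `c + X * p`. -/
def derivative : List ℤ → List ℤ
  | [] => []
  | _ :: p => add p (0 :: derivative p)

/-- Coefficients of the composition `p ∘ q` of two polynomials. -/
def comp : List ℤ → List ℤ → List ℤ
  | [], _ => []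
  | c :: p, q => add [c] (mul q (comp p q))

/-- Coefficients of the polynomial `c + (k + X) * q`. -/
def hornerStep (k : ℤ) : ℤ → List ℤ → List ℤ
  | c, [] => [c]
  | c, a :: q => (c + k * a) :: hornerStep k a q

/-- Coefficients of the Taylor expansion `p (k + X)`. It agrees with `comp p [k, 1]`, but Horner's
scheme is substantially faster in the kernel. -/
def taylor (k : ℤ) (p : List ℤ) : List ℤ := p.foldr (hornerStep k) []

/-- Coefficients of the polynomial `e` for which `e (X ^ 2)` is the even part of `p`. -/
def evens : List ℤ → List ℤ
  | [] => []
  | [c] => [c]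
  | c :: _ :: p => c :: evens p

/-- Coefficients of the polynomial `m ^ d * p (X / m)`, where `d` is the formal degree of `p`. -/
def homogenize (m : ℤ) : List ℤ → List ℤ
  | [] => []
  | c :: p => c * m ^ p.length :: homogenize m p

/-- The number `2 ^ d * ∑ i, |p i| / 2 ^ i`, where `d` is the formal degree of `p`. The sum bounds
`p` on `[-1/2, 1/2]`; clearing its denominators keeps kernel computation within `ℕ` and `ℤ`. -/
def scaledAbsSum : List ℤ → ℕ
  | [] => 0
  | c :: p => c.natAbs * 2 ^ p.length + scaledAbsSum p

/-- The constant coefficient exceeds the bound of the other terms on `[-1/2, 1/2]`. -/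
def constDominates : List ℤ → Bool
  | [] => false
  | c :: p => scaledAbsSum p < c * 2 ^ p.length

variable {p q : List ℤ} {a b m : ℤ} {x : ℝ}

theorem eval_add (p q : List ℤ) (x : ℝ) : eval (add p q) x = eval p x + eval q x := by
  induction p, q using add.induct with
  | case1 q => simp [add, eval]
  | case2 c p => simp [add, eval]
  | case3 c p d q ih =>
    simp only [add, eval, ih]
    push_cast
    ring

theorem eval_smul (a : ℤ) (p : List ℤ) (x : ℝ) : eval (smul a p) x = a * eval p x := by
  induction p with
  | nil => simp [smul, eval]
  | cons c p ih =>
    simp only [smul, List.map_cons, eval] at ih ⊢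
    rw [ih]
    push_cast
    ring

theorem eval_mul (p q : List ℤ) (x : ℝ) : eval (mul p q) x = eval p x * eval q x := by
  induction p with
  | nil => simp [mul, eval]
  | cons c p ih =>
    simp only [mul, eval, eval_add, eval_smul, ih]
    push_cast
    ring

theorem eval_comp (p q : List ℤ) (x : ℝ) : eval (comp p q) x = eval p (eval q x) := by
  induction p with
  | nil => simp [comp, eval]
  | cons c p ih => simp [comp, eval, eval_add, eval_mul, ih]

theorem eval_hornerStep (k c : ℤ) (q : List ℤ) (x : ℝ) :
    eval (hornerStep k c q) x = c + (k + x) * eval q x := by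
  induction q generalizing c with
  | nil => simp [hornerStep, eval]
  | cons a q ih =>
    simp only [hornerStep, eval, ih]
    push_cast
    ring

theorem eval_taylor (k : ℤ) (p : List ℤ) (x : ℝ) : eval (taylor k p) x = eval p (k + x) := by
  induction p with
  | nil => simp [taylor, eval]
  | cons c p ih =>
    rw [taylor, List.foldr_cons, eval_hornerStep, ← taylor, ih, eval]

theorem hasDerivAt_eval (p : List ℤ) (x : ℝ) : HasDerivAt (eval p) (eval (derivative p) x) x := by
  induction p with
  | nil => exact hasDerivAt_const x 0
  | cons c p ih =>
    refine (((hasDerivAt_id x).mul ih).const_add (c : ℝ)).congr_deriv ?_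
    simp [derivative, eval_add, eval]

theorem continuous_eval (p : List ℤ) : Continuous (eval p) :=
  continuous_iff_continuousAt.2 fun x => (hasDerivAt_eval p x).continuousAt

theorem eval_add_eval_neg (p : List ℤ) (x : ℝ) :
    eval p x + eval p (-x) = 2 * eval (evens p) (x ^ 2) := by
  induction p using evens.induct with
  | case1 => simp [evens, eval]
  | case2 c =>
    simp only [evens, eval]
    ring
  | case3 c d p ih =>
    simp only [evens, eval]
    linear_combination x ^ 2 * ih

theorem abs_eval_mul_two_pow_le (p : List ℤ) (hx : |x| ≤ 1 / 2) :
    |eval p x| * 2 ^ p.length ≤ 2 * scaledAbsSum p := by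
  induction p with
  | nil => simp [eval, scaledAbsSum]
  | cons c p ih =>
    have htail : |x * eval p x| ≤ 1 / 2 * |eval p x| := by
      rw [abs_mul]
      gcongr
    simp only [eval, scaledAbsSum, List.length_cons, pow_succ]
    push_cast [Nat.cast_natAbs]
    calc |c + x * eval p x| * (2 ^ p.length * 2)
        ≤ (|(c : ℝ)| + 1 / 2 * |eval p x|) * (2 ^ p.length * 2) := by
          gcongr
          exact (abs_add_le _ _).trans (by gcongr)
      _ = 2 * (|(c : ℝ)| * 2 ^ p.length) + |eval p x| * 2 ^ p.length := by ring
      _ ≤ 2 * (|(c : ℝ)| * 2 ^ p.length + scaledAbsSum p) := by linarith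

theorem eval_pos_of_constDominates (hp : constDominates p) (hx : |x| ≤ 1 / 2) : 0 < eval p x := by
  cases p with
  | nil => exact absurd hp (by simp [constDominates])
  | cons c p =>
    have hc : (scaledAbsSum p : ℝ) < c * 2 ^ p.length := by
      exact_mod_cast of_decide_eq_true hp
    have htail : |x * eval p x| < c := by
      refine lt_of_mul_lt_mul_right ?_ (pow_nonneg zero_le_two p.length)
      calc |x * eval p x| * 2 ^ p.length ≤ 1 / 2 * |eval p x| * 2 ^ p.length := by
            rw [abs_mul]
            gcongr
        _ ≤ scaledAbsSum p := by linarith [abs_eval_mul_two_pow_le p hx]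
        _ < c * 2 ^ p.length := hc
    rw [eval]
    linarith [(abs_lt.1 htail).1]

theorem eval_pos_of_forall_constDominates
    (hp : ∀ k ∈ Finset.Icc a b, constDominates (taylor k p)) (hx : x ∈ Icc (a : ℝ) b) :
    0 < eval p x := by
  have hround : round x ∈ Finset.Icc a b := by
    have h := abs_le.1 (abs_sub_round x)
    rw [Finset.mem_Icc, round_eq]
    exact ⟨Int.le_floor.2 (by linarith [hx.1, h.2]),
      Int.lt_add_one_iff.1 (Int.floor_lt.2 (by push_cast; linarith [hx.2, h.1]))⟩
  have h := eval_pos_of_constDominates (hp _ hround) (abs_sub_round x)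
  rwa [eval_taylor, add_sub_cancel] at h

theorem abs_eval_lt_of_forall_constDominates
    (hadd : ∀ k ∈ Finset.Icc a b, constDominates (taylor k (add (smul m q) p)))
    (hsub : ∀ k ∈ Finset.Icc a b, constDominates (taylor k (add (smul m q) (smul (-1) p))))
    (hx : x ∈ Icc (a : ℝ) b) : |eval p x| < m * eval q x := by
  have hadd_pos := eval_pos_of_forall_constDominates hadd hx
  have hsub_pos := eval_pos_of_forall_constDominates hsub hx
  simp only [eval_add, eval_smul] at hadd_pos hsub_pos
  push_cast at hsub_pos
  exact abs_lt.2 ⟨by linarith, by linarith⟩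

end IntPoly

section Eigenfunction

open IntPoly

/-- Coefficients of an approximate eigenfunction of the transfer operator of `decimationIFS`, in
the variable `y = 4 * x - 10 ∈ [-10, 10]`. The table holds the rounded coefficients of the powers
of `y / 10`; they were computed by power iteration on the matrix of the operator for Chebyshev
collocation of degree `50` on `[-10.6, 10.6]`. -/
def density : List ℤ := homogenize 10
  [945604899995534328, 133909917016169151, 72484544282896242, 34278933313404260, 19312032678352002,
   10920829635142087, 6433883549048262, 3843797548697077, 2333265196432056, 1430822509985576,
   885219542261259, 551462316646032, 345551852881332, 217584779681960, 137580134724904,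
   87298755471429, 55572971259801, 35535940489492, 22741248354195, 14217766614485, 9130211058323,
   7617680295447, 4935781682179, -3423505437132, -2292518586497, 18830200292547, 12413542895228,
   -42829381319445, -28267130802906, 86013758510744, 56757093333162, -138841861285060,
   -91618826070751, 183213048108499, 120895969680527, -195770299219211, -129180745926937,
   168092437255054, 110915472716914, -114242960030005, -75381697316544, 60111375167199,
   39662840048278, -23632794432766, -15593054469141, 6545821961937, 4318831916704, -1142045052129,
   -753472726482, 94955587086, 62643826148]

/-- The polynomial `15 - y`, equal to `25 - 4 * x` if `y = 4 * x - 10`. -/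
def discr : List ℤ := [15, -1]

/-- The polynomial `4 * (15 - y)`: the two preimages of `y` under the decimation are its square
roots. -/
def preimageSq : List ℤ := smul 4 discr

/-- Half the sum of `density` over the two preimages. -/
def meanDensity : List ℤ := comp (evens density) preimageSq

/-- The approximate dimension `0.551618568372460932`, multiplied by `10 ^ 18`. At this exponent the
leading eigenvalue of the transfer operator is `1` up to a small error. -/
def scaledDim : ℤ := 551618568372460932

/-- The common denominator of the derivative of `logQuotient`. -/
def logQuotientDerivDenom : List ℤ := mul discr (mul density meanDensity)

/-- The numerator of the derivative of `logQuotient` over `2 * 10 ^ 18 * logQuotientDerivDenom`. -/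
def logQuotientDerivNum : List ℤ :=
  add
    (smul (2 * 10 ^ 18) (mul discr (add (mul (derivative density) meanDensity)
      (smul 4 (mul (comp (derivative (evens density)) preimageSq) density)))))
    (smul (-scaledDim) (mul density meanDensity))

/-- The logarithm of the quotient of `density` by its transform at the exponent
`scaledDim / 10 ^ 18`. -/
noncomputable def logQuotient (y : ℝ) : ℝ :=
  Real.log (eval density y) + scaledDim / 10 ^ 18 / 2 * Real.log (15 - y) -
    Real.log (2 * eval meanDensity y)

variable {x y : ℝ}

theorem eval_discr (y : ℝ) : eval discr y = 15 - y := by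
  simp [discr, eval]
  ring

theorem eval_preimageSq (y : ℝ) : eval preimageSq y = 4 * (15 - y) := by
  rw [preimageSq, eval_smul, eval_discr, Int.cast_ofNat]

theorem eval_discr_pos (hy : y ∈ Icc (-10) 10) : 0 < eval discr y := by
  linarith [eval_discr y, hy.2]

theorem eval_density_pos (hy : y ∈ Icc (-10) 10) : 0 < eval density y := by
  have hdom : ∀ k ∈ Finset.Icc (-10) 10, constDominates (taylor k density) := by decide +kernel
  exact eval_pos_of_forall_constDominates hdom (by exact_mod_cast hy)

theorem eval_meanDensity_pos (hy : y ∈ Icc (-10) 10) : 0 < eval meanDensity y := by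
  have hdom : ∀ k ∈ Finset.Icc (-10) 10, constDominates (taylor k meanDensity) := by
    decide +kernel
  exact eval_pos_of_forall_constDominates hdom (by exact_mod_cast hy)

theorem eval_logQuotientDerivDenom_pos (hy : y ∈ Icc (-10) 10) :
    0 < eval logQuotientDerivDenom y := by
  rw [logQuotientDerivDenom, eval_mul, eval_mul]
  exact mul_pos (eval_discr_pos hy) (mul_pos (eval_density_pos hy) (eval_meanDensity_pos hy))

theorem constDominates_add_logQuotientDerivNum :
    ∀ k ∈ Finset.Icc (-10) 10, constDominates
      (taylor k (add (smul 100 logQuotientDerivDenom) logQuotientDerivNum)) := by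
  decide +kernel

theorem constDominates_sub_logQuotientDerivNum :
    ∀ k ∈ Finset.Icc (-10) 10, constDominates
      (taylor k (add (smul 100 logQuotientDerivDenom) (smul (-1) logQuotientDerivNum))) := by
  decide +kernel

theorem abs_eval_logQuotientDerivNum_lt (hy : y ∈ Icc (-10) 10) :
    |eval logQuotientDerivNum y| < 100 * eval logQuotientDerivDenom y := by
  exact_mod_cast abs_eval_lt_of_forall_constDominates constDominates_add_logQuotientDerivNum
    constDominates_sub_logQuotientDerivNum (x := y) (by exact_mod_cast hy)

theorem hasDerivAt_eval_meanDensity (y : ℝ) :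
    HasDerivAt (eval meanDensity) (eval (derivative (evens density)) (4 * (15 - y)) * -4) y := by
  have hsq : HasDerivAt (fun y : ℝ => 4 * (15 - y)) (-4) y := by
    simpa using ((hasDerivAt_id y).const_sub 15).const_mul 4
  refine ((hasDerivAt_eval (evens density) _).comp y hsq).congr_of_eventuallyEq
    (.of_forall fun z => ?_)
  rw [meanDensity, eval_comp, eval_preimageSq, Function.comp]

theorem hasDerivAt_logQuotient (hy : y ∈ Icc (-10) 10) :
    HasDerivAt logQuotient
      (eval logQuotientDerivNum y / (2 * 10 ^ 18 * eval logQuotientDerivDenom y)) y := by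
  have hz := eval_discr_pos hy
  have hF := eval_density_pos hy
  have hE := eval_meanDensity_pos hy
  rw [eval_discr] at hz
  have hlog := ((((hasDerivAt_id y).const_sub 15).log hz.ne').const_mul
    ((scaledDim : ℝ) / 10 ^ 18 / 2))
  refine ((((hasDerivAt_eval density y).log hF.ne').add hlog).sub
    (((hasDerivAt_eval_meanDensity y).const_mul 2).log (by positivity))).congr_deriv ?_
  simp only [logQuotientDerivNum, logQuotientDerivDenom, eval_add, eval_smul, eval_mul, eval_comp,
    eval_discr, eval_preimageSq, id]
  push_cast
  field_simp
  ring

theorem abs_deriv_logQuotient_le (hy : y ∈ Icc (-10) 10) :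
    |eval logQuotientDerivNum y / (2 * 10 ^ 18 * eval logQuotientDerivDenom y)| ≤
      5 / 10 ^ 17 := by
  have hD := eval_logQuotientDerivDenom_pos hy
  rw [abs_div, abs_of_pos (a := 2 * 10 ^ 18 * _) (by positivity), div_le_iff₀ (by positivity)]
  linarith [abs_eval_logQuotientDerivNum_lt hy]

theorem log_two_mem_Icc :
    Real.log 2 ∈ Icc (0.6931471805599453094 : ℝ) 0.6931471805599453095 := by
  have hlower := Real.sum_range_le_log_div (x := 1 / 3) (by norm_num) (by norm_num) 20
  have hupper := Real.log_div_le_sum_range_add (x := 1 / 3) (by norm_num) (by norm_num) 20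
  rw [show (1 + 1 / 3 : ℝ) / (1 - 1 / 3) = 2 by norm_num] at hlower hupper
  norm_num [Finset.sum_range_succ] at hlower hupper
  constructor <;> linarith

-- The bounds are `(1 + t) / (1 - t)` with `t` rounded to 22 decimals: the logarithms of such
-- quotients are sums of the rapidly converging series of `2 * artanh t`.
theorem eval_meanDensity_div_eval_density_mem_Icc :
    eval meanDensity (-1) / eval density (-1) ∈
      Icc ((1 + 0.0357640052677802504461 : ℝ) / (1 - 0.0357640052677802504461))
        ((1 + 0.0357640052677802504462) / (1 - 0.0357640052677802504462)) := by
  have hF := eval_density_pos (y := -1) (by norm_num)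
  rw [mem_Icc, le_div_iff₀ hF, div_le_iff₀ hF, meanDensity, eval_comp, eval_preimageSq]
  constructor <;> norm_num [density, homogenize, evens, eval]

theorem log_eval_meanDensity_sub_log_eval_density_mem_Icc :
    Real.log (eval meanDensity (-1)) - Real.log (eval density (-1)) ∈
      Icc (0.07155853026382411923 : ℝ) 0.07155853026382411925 := by
  have hF := eval_density_pos (y := -1) (by norm_num)
  have hE := eval_meanDensity_pos (y := -1) (by norm_num)
  obtain ⟨hlower, hupper⟩ := eval_meanDensity_div_eval_density_mem_Icc
  rw [← Real.log_div hE.ne' hF.ne']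
  have hmonoLower := Real.log_le_log (by norm_num) hlower
  have hmonoUpper := Real.log_le_log (div_pos hE hF) hupper
  have hseriesLower := Real.sum_range_le_log_div (x := 0.0357640052677802504461)
    (by norm_num) (by norm_num) 7
  have hseriesUpper := Real.log_div_le_sum_range_add (x := 0.0357640052677802504462)
    (by norm_num) (by norm_num) 7
  have hsumLower : (0.07155853026382411923 : ℝ) / 2 ≤
      ∑ i ∈ Finset.range 7, 0.0357640052677802504461 ^ (2 * i + 1) / (2 * (i : ℝ) + 1) := by
    norm_num [Finset.sum_range_succ]
  have hsumUpper :
      ∑ i ∈ Finset.range 7, 0.0357640052677802504462 ^ (2 * i + 1) / (2 * (i : ℝ) + 1) +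
        0.0357640052677802504462 ^ (2 * 7 + 1) / (1 - 0.0357640052677802504462 ^ 2) ≤
      (0.07155853026382411925 : ℝ) / 2 := by
    norm_num [Finset.sum_range_succ]
  exact ⟨by linarith only [hsumLower, hseriesLower, hmonoLower],
    by linarith only [hsumUpper, hseriesUpper, hmonoUpper]⟩

theorem abs_logQuotient_neg_one_le : |logQuotient (-1)| ≤ 1 / 10 ^ 17 := by
  have hE := eval_meanDensity_pos (y := -1) (by norm_num)
  obtain ⟨htwoLower, htwoUpper⟩ := log_two_mem_Icc
  obtain ⟨hlower, hupper⟩ := log_eval_meanDensity_sub_log_eval_density_mem_Icc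
  have hsixteen : Real.log (15 - -1) = 4 * Real.log 2 := by
    rw [show (15 - -1 : ℝ) = 2 ^ 4 by norm_num, Real.log_pow, Nat.cast_ofNat]
  rw [logQuotient, hsixteen, Real.log_mul two_ne_zero hE.ne', scaledDim, abs_le]
  constructor <;> push_cast <;> linarith

theorem abs_logQuotient_le (hy : y ∈ Icc (-10) 10) : |logQuotient y| ≤ 6 / 10 ^ 16 := by
  have hmean := (convex_Icc (-10 : ℝ) 10).norm_image_sub_le_of_norm_hasDerivWithin_le
    (fun z hz => (hasDerivAt_logQuotient hz).hasDerivWithinAt)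
    (fun z hz => abs_deriv_logQuotient_le hz) (show -1 ∈ Icc (-10 : ℝ) 10 by norm_num) hy
  have hdist : |y - -1| ≤ 11 := abs_le.2 ⟨by linarith [hy.1], by linarith [hy.2]⟩
  calc |logQuotient y| = |logQuotient y - logQuotient (-1) + logQuotient (-1)| := by
        rw [sub_add_cancel]
    _ ≤ |logQuotient y - logQuotient (-1)| + |logQuotient (-1)| := abs_add_le _ _
    _ ≤ 5 / 10 ^ 17 * |y - -1| + 1 / 10 ^ 17 := add_le_add hmean abs_logQuotient_neg_one_le
    _ ≤ 6 / 10 ^ 16 := by linarith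

/-- The approximate eigenfunction `density` in the original variable. -/
noncomputable def eigenfunction (x : ℝ) : ℝ := eval density (4 * x - 10)

theorem four_mul_sub_ten_mem_Icc (hx : x ∈ Icc 0 5) : 4 * x - 10 ∈ Icc (-10) 10 :=
  ⟨by linarith [hx.1], by linarith [hx.2]⟩

theorem eigenfunction_pos (hx : x ∈ Icc 0 5) : 0 < eigenfunction x :=
  eval_density_pos (four_mul_sub_ten_mem_Icc hx)

theorem continuous_eigenfunction : Continuous eigenfunction :=
  (continuous_eval density).comp (by fun_prop)

theorem eigenfunction_S_add_eigenfunction_S (hx : x ∈ Icc 0 5) :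
    eigenfunction (S 1 x) + eigenfunction (S (-1) x) = 2 * eval meanDensity (4 * x - 10) := by
  have hz : 0 ≤ 25 - 4 * x := by linarith [hx.2]
  have h := eval_add_eval_neg density (2 * √(25 - 4 * x))
  rw [mul_pow, Real.sq_sqrt hz] at h
  rw [meanDensity, eval_comp, eval_preimageSq,
    show 4 * (15 - (4 * x - 10)) = 2 ^ 2 * (25 - 4 * x) by ring, ← h]
  simp only [eigenfunction, S]
  congr 2 <;> ring

theorem decimationIFS_transfer_eigenfunction (s : ℝ) (hx : x ∈ Icc 0 5) :
    decimationIFS.transfer s eigenfunction x =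
      Real.exp ((scaledDim / 10 ^ 18 - s) / 2 * Real.log (25 - 4 * x) -
        logQuotient (4 * x - 10)) * eigenfunction x := by
  have hz : 0 < 25 - 4 * x := by linarith [hx.2]
  have hE := eval_meanDensity_pos (four_mul_sub_ten_mem_Icc hx)
  have hF : 0 < eval density (4 * x - 10) := eigenfunction_pos hx
  have hpow : (√(25 - 4 * x))⁻¹ ^ s = Real.exp (-(s / 2) * Real.log (25 - 4 * x)) := by
    rw [Real.rpow_def_of_pos (by positivity), Real.log_inv, Real.log_sqrt hz.le]
    ring_nf
  have hexponent : (scaledDim / 10 ^ 18 - s) / 2 * Real.log (25 - 4 * x) -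
      logQuotient (4 * x - 10) = -(s / 2) * Real.log (25 - 4 * x) +
        Real.log (2 * eval meanDensity (4 * x - 10)) - Real.log (eval density (4 * x - 10)) := by
    rw [logQuotient, show 15 - (4 * x - 10) = 25 - 4 * x by ring]
    ring
  rw [decimationIFS_transfer_apply, eigenfunction_S_add_eigenfunction_S hx, hpow, hexponent,
    Real.exp_sub, Real.exp_add, Real.exp_log (by positivity), Real.exp_log hF, eigenfunction,
    div_mul_cancel₀ _ hF.ne']

theorem lt_log_twenty_five_sub (hx : x ∈ Icc 0 5) : 1.6 < Real.log (25 - 4 * x) := by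
  have hexp : Real.exp 1.6 ^ 5 < 5 ^ 5 :=
    calc Real.exp 1.6 ^ 5 = Real.exp 1 ^ 8 := by
          rw [← Real.exp_nat_mul, ← Real.exp_nat_mul]
          norm_num
      _ < 2.7182818286 ^ 8 := by
          gcongr
          exact Real.exp_one_lt_d9
      _ < 5 ^ 5 := by norm_num
  rw [Real.lt_log_iff_exp_lt (by linarith [hx.2])]
  linarith [lt_of_pow_lt_pow_left₀ 5 (by norm_num) hexp, hx.2]

theorem mul_eigenfunction_le_transfer (hx : x ∈ Icc 0 5) :
    Real.exp (1 / 10 ^ 16) * eigenfunction x ≤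
      decimationIFS.transfer 0.55161856837246 eigenfunction x := by
  have hlog := lt_log_twenty_five_sub hx
  have hquot := abs_le.1 (abs_logQuotient_le (four_mul_sub_ten_mem_Icc hx))
  rw [decimationIFS_transfer_eigenfunction _ hx, scaledDim]
  refine mul_le_mul_of_nonneg_right (Real.exp_le_exp.2 ?_) (eigenfunction_pos hx).le
  push_cast
  linarith

theorem transfer_le_mul_eigenfunction (hx : x ∈ Icc 0 5) :
    decimationIFS.transfer 0.55161856837247 eigenfunction x ≤
      Real.exp (-(6 / 10 ^ 15)) * eigenfunction x := by
  have hlog := lt_log_twenty_five_sub hx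
  have hquot := abs_le.1 (abs_logQuotient_le (four_mul_sub_ten_mem_Icc hx))
  rw [decimationIFS_transfer_eigenfunction _ hx, scaledDim]
  refine mul_le_mul_of_nonneg_right (Real.exp_le_exp.2 ?_) (eigenfunction_pos hx).le
  push_cast
  linarith

end Eigenfunction

theorem stmt_2 (J : Set ℝ) (hsub : J ⊆ Set.Icc 0 5) (hne : J.Nonempty)
    (hcl : IsClosed J) (heq : J = S (-1) '' J ∪ S 1 '' J)
    (hmin : ∀ J' : Set ℝ, J' ⊆ Set.Icc 0 5 → J'.Nonempty → IsClosed J' →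
      J' = S (-1) '' J' ∪ S 1 '' J' → J ⊆ J') :
    ENNReal.ofReal 0.55161856837246 ≤ dimH J ∧
      dimH J ≤ ENNReal.ofReal 0.55161856837247 := by
  have : Nontrivial ℤˣ := ⟨1, -1, by decide⟩
  have hunion : J = ⋃ ε, decimationIFS.map ε '' J := by
    rw [iUnion_decimationIFS_image, ← heq]
  have hmaps (ε : ℤˣ) : MapsTo (decimationIFS.map ε) J J := by
    rw [mapsTo_iff_image_subset]
    exact (subset_iUnion (fun ε => decimationIFS.map ε '' J) ε).trans hunion.ge
  constructor
  · exact decimationIFS.le_dimH_of_le_transfer isCompact_Icc continuous_eigenfunction.continuousOn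
      (fun _ => eigenfunction_pos) (by norm_num) (Real.one_lt_exp_iff.2 (by norm_num))
      (fun _ => mul_eigenfunction_le_transfer) pairwise_disjoint_image_decimationIFS hsub
      (isCompact_Icc.of_isClosed_subset hcl hsub) hne hmaps
  · exact decimationIFS.dimH_le_of_transfer_le isCompact_Icc continuous_eigenfunction.continuousOn
      (fun _ => eigenfunction_pos) (by norm_num) (Real.exp_pos _).le
      (Real.exp_lt_one_iff.2 (by norm_num)) (fun _ => transfer_le_mul_eigenfunction) hsub hunion.le
end

section
/- For every integer d ≥ 2, if J_{T^d} ⊆ [0, 3+d] is nonempty, closed, satisfies J_{T^d} = S_{−1,d}(J_{T^d}) ∪ S_{+1,d}(J_{T^d}), and is contained in every nonempty closed subset of [0,3+d] satisfying this set equation, then log 2 / log(d+3) ≤ dim_H(J_{T^d}) ≤ 2·log 2 / (log(d+3) + log(d−1)). In particular dim_H(J_{T^d}) → 0 as d → ∞. -/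
open Set MeasureTheory Filter

/-- The two inverse branches of the decimation polynomial `R_d(x) = x((3+d)-x)`
associated to the `d`-dimensional Sierpiński gasket. -/
noncomputable def Sd (d : ℕ) (ε : ℝ) (x : ℝ) : ℝ :=
  ((3 + (d:ℝ)) + ε * Real.sqrt ((3 + (d:ℝ))^2 - 4 * x)) / 2

/-!
On `[0, c]` both branches `(c ± √(c² - 4x)) / 2` contract distances by a factor between `1 / c` and
`1 / √(c (c - 4))`, because `|x - y| = |S x - S y| (√(c² - 4x) + √(c² - 4y)) / 2`. Two contractions
of ratio at most `K⁻¹` cover their invariant set by `2 ^ n` sets of diameter `O(K⁻ⁿ)`, which bounds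
the dimension above by `log 2 / log K`. If conversely the contraction ratios are at least `K⁻¹` and
the two pieces are at positive distance, then reading the address of a point as a binary expansion
is a map onto `[0, 1]` that is Hölder continuous of exponent `log 2 / log K`, which bounds the
dimension below.
-/

open scoped ENNReal NNReal Topology

theorem ennreal_pow_mul_rpow (a b : ℝ≥0∞) {s : ℝ} (hs : 0 ≤ s) (n : ℕ) :
    (a ^ n * b) ^ s = (a ^ s) ^ n * b ^ s := by
  rw [ENNReal.mul_rpow_of_nonneg _ _ hs, ← ENNReal.rpow_natCast_mul, mul_comm (n : ℝ),
    ENNReal.rpow_mul_natCast]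

theorem toNNReal_rpow_toNNReal_logb {b x : ℝ} (hb : 1 < b) (hx : 1 ≤ x) :
    b.toNNReal ^ ((Real.logb b x).toNNReal : ℝ) = x.toNNReal := by
  rw [Real.coe_toNNReal _ (Real.logb_nonneg hb hx), ← Real.toNNReal_rpow_of_nonneg (by linarith),
    Real.rpow_logb (by linarith) hb.ne' (by linarith)]

theorem inv_pow_le_inv_rpow_mul {N n : ℕ} {K δ s : ℝ≥0} {r : ℝ≥0∞} (hδ : δ ≠ 0)
    (hs : K ^ (s : ℝ) ≤ N) (hr : δ ≤ (K : ℝ≥0∞) ^ n * r) :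
    ((N : ℝ≥0∞) ^ n)⁻¹ ≤ ((δ ^ (s : ℝ))⁻¹ : ℝ≥0) * r ^ (s : ℝ) := by
  have hδs : δ ^ (s : ℝ) ≠ 0 := (NNReal.rpow_pos hδ.bot_lt).ne'
  have hs' : (K : ℝ≥0∞) ^ (s : ℝ) ≤ N := by
    rw [← ENNReal.coe_rpow_of_nonneg _ s.coe_nonneg]
    exact_mod_cast hs
  rw [ENNReal.coe_inv hδs, ← ENNReal.div_eq_inv_mul,
    ENNReal.le_div_iff_mul_le (.inl (ENNReal.coe_ne_zero.2 hδs)) (.inl ENNReal.coe_ne_top),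
    ← ENNReal.div_eq_inv_mul]
  refine ENNReal.div_le_of_le_mul' ?_
  calc ((δ ^ (s : ℝ) : ℝ≥0) : ℝ≥0∞) = (δ : ℝ≥0∞) ^ (s : ℝ) :=
        ENNReal.coe_rpow_of_nonneg _ s.coe_nonneg
    _ ≤ ((K : ℝ≥0∞) ^ n * r) ^ (s : ℝ) := by gcongr
    _ = ((K : ℝ≥0∞) ^ (s : ℝ)) ^ n * r ^ (s : ℝ) := ennreal_pow_mul_rpow _ _ s.coe_nonneg n
    _ ≤ (N : ℝ≥0∞) ^ n * r ^ (s : ℝ) := by gcongr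

theorem mapsTo_of_iUnion_image_subset {ι X : Type*} {f : ι → X → X} {J : Set X}
    (hJ : ⋃ i, f i '' J ⊆ J) (i : ι) : MapsTo (f i) J J :=
  mapsTo_iff_image_subset.2 (iUnion_subset_iff.1 hJ i)

section UpperBound

variable {ι X : Type*} {f : ι → X → X} {J : Set X}

/-- The cylinder sets `f (w 0) ∘ ⋯ ∘ f (w (n - 1)) '' J` of an iterated function system, indexed by
the words `w` of length `n`. -/
def ifsCylinder (f : ι → X → X) (J : Set X) : (n : ℕ) → (Fin n → ι) → Set X
  | 0, _ => J
  | n + 1, w => f (w 0) '' ifsCylinder f J n (Fin.tail w)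

theorem ifsCylinder_subset (hf : ∀ i, MapsTo (f i) J J) (n : ℕ) (w : Fin n → ι) :
    ifsCylinder f J n w ⊆ J := by
  induction n with
  | zero => exact subset_rfl
  | succ n ih => exact (image_mono (ih _)).trans (hf _).image_subset

theorem subset_iUnion_ifsCylinder (hJ : J ⊆ ⋃ i, f i '' J) (n : ℕ) :
    J ⊆ ⋃ w, ifsCylinder f J n w := by
  induction n with
  | zero => exact fun x hx => mem_iUnion.2 ⟨Fin.elim0, hx⟩
  | succ n ih =>
    intro x hx
    obtain ⟨i, y, hy, rfl⟩ := mem_iUnion.1 (hJ hx)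
    obtain ⟨w, hw⟩ := mem_iUnion.1 (ih hy)
    exact mem_iUnion.2 ⟨Fin.cons i w, y, by simpa only [Fin.tail_cons] using hw, by simp⟩

variable [EMetricSpace X] {K s : ℝ≥0}

theorem ediam_ifsCylinder_le (hmaps : ∀ i, MapsTo (f i) J J)
    (hf : ∀ i, LipschitzOnWith K (f i) J) (n : ℕ) (w : Fin n → ι) :
    Metric.ediam (ifsCylinder f J n w) ≤ (K : ℝ≥0∞) ^ n * Metric.ediam J := by
  induction n with
  | zero => simp [ifsCylinder]
  | succ n ih =>
    calc Metric.ediam (ifsCylinder f J (n + 1) w)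
        ≤ K * Metric.ediam (ifsCylinder f J n (Fin.tail w)) := by
          simpa [ifsCylinder] using (hf (w 0)).holderOnWith.ediam_image_le_of_subset
            (ifsCylinder_subset hmaps n (Fin.tail w))
      _ ≤ K * ((K : ℝ≥0∞) ^ n * Metric.ediam J) := by gcongr; exact ih _
      _ = (K : ℝ≥0∞) ^ (n + 1) * Metric.ediam J := by ring

theorem sum_ediam_ifsCylinder_rpow_le [Fintype ι] (hs : Fintype.card ι * K ^ (s : ℝ) ≤ 1)
    (hmaps : ∀ i, MapsTo (f i) J J) (hf : ∀ i, LipschitzOnWith K (f i) J) (n : ℕ) :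
    ∑ w, Metric.ediam (ifsCylinder f J n w) ^ (s : ℝ) ≤ Metric.ediam J ^ (s : ℝ) := by
  have hs' : (Fintype.card ι : ℝ≥0∞) * (K : ℝ≥0∞) ^ (s : ℝ) ≤ 1 := by
    rw [← ENNReal.coe_rpow_of_nonneg _ s.coe_nonneg]
    exact_mod_cast hs
  calc ∑ w, Metric.ediam (ifsCylinder f J n w) ^ (s : ℝ)
      ≤ ∑ _w : Fin n → ι, ((K : ℝ≥0∞) ^ n * Metric.ediam J) ^ (s : ℝ) := by
        gcongr with w
        exact ediam_ifsCylinder_le hmaps hf n w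
    _ = (Fintype.card ι * (K : ℝ≥0∞) ^ (s : ℝ)) ^ n * Metric.ediam J ^ (s : ℝ) := by
        rw [Finset.sum_const, Finset.card_univ, Fintype.card_fun, Fintype.card_fin, nsmul_eq_mul,
          ennreal_pow_mul_rpow _ _ s.coe_nonneg, Nat.cast_pow, mul_pow, mul_assoc]
    _ ≤ 1 ^ n * Metric.ediam J ^ (s : ℝ) := by gcongr
    _ = Metric.ediam J ^ (s : ℝ) := by rw [one_pow, one_mul]

theorem dimH_le_of_lipschitzOnWith_of_iUnion_image_eq [Fintype ι] (hK : K < 1)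
    (hs : Fintype.card ι * K ^ (s : ℝ) ≤ 1) (hJ : ⋃ i, f i '' J = J)
    (hf : ∀ i, LipschitzOnWith K (f i) J) (hbdd : Metric.ediam J ≠ ∞) : dimH J ≤ s := by
  borelize X
  have hmaps := mapsTo_of_iUnion_image_subset hJ.subset
  have hlim : Tendsto (fun n : ℕ => (K : ℝ≥0∞) ^ n * Metric.ediam J) atTop (𝓝 0) := by
    simpa using ENNReal.Tendsto.mul_const (b := Metric.ediam J)
      (ENNReal.tendsto_pow_atTop_nhds_zero_of_lt_one (ENNReal.coe_lt_one_iff.2 hK)) (Or.inr hbdd)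
  refine dimH_le_of_hausdorffMeasure_ne_top
    (ne_top_of_le_ne_top (ENNReal.rpow_ne_top_of_nonneg s.coe_nonneg hbdd) ?_)
  calc μH[s] J
      ≤ liminf (fun n => ∑ w, Metric.ediam (ifsCylinder f J n w) ^ (s : ℝ)) atTop :=
        Measure.hausdorffMeasure_le_liminf_sum s J _ hlim (ifsCylinder f J)
          (.of_forall (ediam_ifsCylinder_le hmaps hf))
          (.of_forall (subset_iUnion_ifsCylinder hJ.superset))
    _ ≤ liminf (fun _ : ℕ => Metric.ediam J ^ (s : ℝ)) atTop :=
        liminf_le_liminf (.of_forall (sum_ediam_ifsCylinder_rpow_le hs hmaps hf))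
    _ = Metric.ediam J ^ (s : ℝ) := liminf_const _

end UpperBound

section LowerBound

variable {ι X : Type*} {f : ι → X → X} {J : Set X} {label : X → ι} {shift : X → X}

/-- A choice, for every point of `J`, of a way to write it as `f i y` with `y ∈ J`: the index `i` is
its label and the point `y` its shift. The address of `x` is `n ↦ label (shift^[n] x)`. -/
structure IsIFSDecoder (f : ι → X → X) (J : Set X) (label : X → ι) (shift : X → X) : Prop where
  mapsTo_shift : MapsTo shift J J
  apply_label_shift : ∀ x ∈ J, f (label x) (shift x) = x

theorem exists_isIFSDecoder [Nonempty ι] (hJ : J ⊆ ⋃ i, f i '' J) :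
    ∃ label shift, IsIFSDecoder f J label shift := by
  have hpre : ∀ x ∈ J, ∃ i, ∃ y, y ∈ J ∧ f i y = x := fun x hx => mem_iUnion.1 (hJ hx)
  choose! label shift hmem happly using hpre
  exact ⟨label, shift, hmem, happly⟩

/-- The number in `[0, 1]` whose expansion in base `card ι` is the address of `x`. -/
noncomputable def addressValue [Fintype ι] (label : X → ι) (shift : X → X) (x : X) : ℝ :=
  Real.ofDigits fun n => Fintype.equivFin ι (label (shift^[n] x))

theorem dist_addressValue_ofDigits_le [Fintype ι] {x : X} {t : ℕ → ι} {n : ℕ}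
    (h : ∀ k < n, label (shift^[k] x) = t k) :
    dist (addressValue label shift x) (Real.ofDigits fun k => Fintype.equivFin ι (t k)) ≤
      ((Fintype.card ι : ℝ) ^ n)⁻¹ :=
  Real.abs_ofDigits_sub_ofDigits_le fun k hk => congrArg _ (h k hk)

theorem IsIFSDecoder.shift_apply (h : IsIFSDecoder f J label shift) (hmaps : ∀ i, MapsTo (f i) J J)
    {i : ι} (hinj : InjOn (f i) J) {y : X} (hy : y ∈ J) (hlabel : label (f i y) = i) :
    shift (f i y) = y :=
  hinj (h.mapsTo_shift (hmaps i hy)) hy <| by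
    simpa only [hlabel] using h.apply_label_shift _ (hmaps i hy)

theorem exists_forall_lt_label_iterate_eq (hne : J.Nonempty) (hmaps : ∀ i, MapsTo (f i) J J)
    (hlabel : ∀ i, ∀ y ∈ J, label (f i y) = i)
    (hshift : ∀ i, ∀ y ∈ J, shift (f i y) = y) (t : ℕ → ι) (n : ℕ) :
    ∃ x ∈ J, ∀ k < n, label (shift^[k] x) = t k := by
  induction n generalizing t with
  | zero => exact hne.imp fun x hx => ⟨hx, fun k hk => absurd hk k.not_lt_zero⟩
  | succ n ih =>
    obtain ⟨y, hy, hyt⟩ := ih fun k => t (k + 1)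
    refine ⟨f (t 0) y, hmaps _ hy, fun k hk => ?_⟩
    cases k with
    | zero => exact hlabel _ y hy
    | succ k => rw [Function.iterate_succ_apply, hshift _ y hy, hyt k (by lia)]

theorem Icc_subset_image_addressValue [Fintype ι] (hcard : 1 < Fintype.card ι)
    (hclosed : IsClosed (addressValue label shift '' J))
    (hprefix : ∀ (t : ℕ → ι) (n : ℕ), ∃ x ∈ J, ∀ k < n, label (shift^[k] x) = t k) :
    Icc 0 1 ⊆ addressValue label shift '' J := by
  intro v hv
  obtain ⟨t, -, rfl⟩ := Real.ofDigits_SurjOn hcard hv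
  rw [← hclosed.closure_eq, Metric.mem_closure_iff]
  intro ε hε
  obtain ⟨n, hn⟩ := exists_pow_lt_of_lt_one hε
    (inv_lt_one_of_one_lt₀ (Nat.one_lt_cast (α := ℝ).2 hcard))
  obtain ⟨x, hx, hxt⟩ := hprefix (fun k => (Fintype.equivFin ι).symm (t k)) n
  refine ⟨_, mem_image_of_mem _ hx, ?_⟩
  rw [dist_comm]
  calc _ ≤ ((Fintype.card ι : ℝ) ^ n)⁻¹ := by
        simpa only [Equiv.apply_symm_apply] using dist_addressValue_ofDigits_le hxt
    _ < ε := by rwa [← inv_pow]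

variable [EMetricSpace X] {K δ s : ℝ≥0}

namespace IsIFSDecoder

theorem label_apply (h : IsIFSDecoder f J label shift) (hmaps : ∀ i, MapsTo (f i) J J)
    (hδ : δ ≠ 0) (hsep : ∀ i j, i ≠ j → ∀ x ∈ J, ∀ y ∈ J, δ ≤ edist (f i x) (f j y))
    {i : ι} {y : X} (hy : y ∈ J) : label (f i y) = i := by
  by_contra hne
  have hle := hsep _ _ hne _ (h.mapsTo_shift (hmaps i hy)) _ hy
  rw [h.apply_label_shift _ (hmaps i hy), edist_self] at hle
  exact hδ (by simpa using hle)

theorem edist_iterate_shift_le (h : IsIFSDecoder f J label shift)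
    (hexp : ∀ i, AntilipschitzWith K (J.domRestrict (f i))) (n : ℕ) {x y : X} (hx : x ∈ J)
    (hy : y ∈ J) (hxy : ∀ k < n, label (shift^[k] x) = label (shift^[k] y)) :
    edist (shift^[n] x) (shift^[n] y) ≤ (K : ℝ≥0∞) ^ n * edist x y := by
  induction n generalizing x y with
  | zero => simp
  | succ n ih =>
    have hlabel : label x = label y := hxy 0 n.succ_pos
    have hstep : edist (shift x) (shift y) ≤ K * edist x y := by
      have := hexp (label x) ⟨_, h.mapsTo_shift hx⟩ ⟨_, h.mapsTo_shift hy⟩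
      rwa [domRestrict_apply, domRestrict_apply, h.apply_label_shift x hx, hlabel,
        h.apply_label_shift y hy] at this
    calc edist (shift^[n + 1] x) (shift^[n + 1] y)
        ≤ (K : ℝ≥0∞) ^ n * edist (shift x) (shift y) :=
          ih (h.mapsTo_shift hx) (h.mapsTo_shift hy) fun k hk => hxy (k + 1) (by lia)
      _ ≤ (K : ℝ≥0∞) ^ n * (K * edist x y) := by gcongr
      _ = (K : ℝ≥0∞) ^ (n + 1) * edist x y := by ring

theorem le_edist_of_label_iterate_ne (h : IsIFSDecoder f J label shift)
    (hexp : ∀ i, AntilipschitzWith K (J.domRestrict (f i)))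
    (hsep : ∀ i j, i ≠ j → ∀ x ∈ J, ∀ y ∈ J, δ ≤ edist (f i x) (f j y))
    {n : ℕ} {x y : X} (hx : x ∈ J) (hy : y ∈ J)
    (hxy : ∀ k < n, label (shift^[k] x) = label (shift^[k] y))
    (hn : label (shift^[n] x) ≠ label (shift^[n] y)) :
    δ ≤ (K : ℝ≥0∞) ^ n * edist x y := by
  have hx' := h.mapsTo_shift.iterate n hx
  have hy' := h.mapsTo_shift.iterate n hy
  calc (δ : ℝ≥0∞)
      ≤ edist (f (label (shift^[n] x)) (shift (shift^[n] x)))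
          (f (label (shift^[n] y)) (shift (shift^[n] y))) :=
        hsep _ _ hn _ (h.mapsTo_shift hx') _ (h.mapsTo_shift hy')
    _ = edist (shift^[n] x) (shift^[n] y) := by
        rw [h.apply_label_shift _ hx', h.apply_label_shift _ hy']
    _ ≤ (K : ℝ≥0∞) ^ n * edist x y := h.edist_iterate_shift_le hexp n hx hy hxy

theorem holderOnWith_addressValue [Fintype ι] (h : IsIFSDecoder f J label shift)
    (hexp : ∀ i, AntilipschitzWith K (J.domRestrict (f i))) (hδ : δ ≠ 0)
    (hsep : ∀ i j, i ≠ j → ∀ x ∈ J, ∀ y ∈ J, δ ≤ edist (f i x) (f j y))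
    (hs : K ^ (s : ℝ) ≤ Fintype.card ι) :
    HolderOnWith (δ ^ (s : ℝ))⁻¹ s (addressValue label shift) J := by
  intro x hx y hy
  have : Nonempty ι := ⟨label x⟩
  by_cases hxy : (fun n => label (shift^[n] x)) = fun n => label (shift^[n] y)
  · have hval : addressValue label shift x = addressValue label shift y :=
      congrArg (fun t : ℕ → ι => Real.ofDigits fun n => Fintype.equivFin ι (t n)) hxy
    rw [hval, edist_self]
    exact zero_le
  set n := PiNat.firstDiff (fun n => label (shift^[n] x)) fun n => label (shift^[n] y)
  have hbefore : ∀ k < n, label (shift^[k] x) = label (shift^[k] y) :=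
    fun k hk => PiNat.apply_eq_of_lt_firstDiff hk
  have hdist : (δ : ℝ≥0∞) ≤ (K : ℝ≥0∞) ^ n * edist x y :=
    h.le_edist_of_label_iterate_ne hexp hsep hx hy hbefore (PiNat.apply_firstDiff_ne hxy)
  calc edist (addressValue label shift x) (addressValue label shift y)
      ≤ ENNReal.ofReal ((Fintype.card ι : ℝ) ^ n)⁻¹ := by
        rw [edist_dist]
        exact ENNReal.ofReal_le_ofReal (dist_addressValue_ofDigits_le hbefore)
    _ = ((Fintype.card ι : ℝ≥0∞) ^ n)⁻¹ := by
        rw [ENNReal.ofReal_inv_of_pos (by positivity), ENNReal.ofReal_pow (by positivity),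
          ENNReal.ofReal_natCast]
    _ ≤ ((δ ^ (s : ℝ))⁻¹ : ℝ≥0) * edist x y ^ (s : ℝ) :=
        inv_pow_le_inv_rpow_mul hδ hs hdist

end IsIFSDecoder

theorem le_dimH_of_antilipschitzWith_of_iUnion_image_eq [Fintype ι] (hK : 1 < K) (hδ : δ ≠ 0)
    (hs : K ^ (s : ℝ) ≤ Fintype.card ι) (hJ : ⋃ i, f i '' J = J)
    (hexp : ∀ i, AntilipschitzWith K (J.domRestrict (f i)))
    (hsep : ∀ i j, i ≠ j → ∀ x ∈ J, ∀ y ∈ J, δ ≤ edist (f i x) (f j y))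
    (hcompact : IsCompact J) (hne : J.Nonempty) : s ≤ dimH J := by
  rcases eq_zero_or_pos s with rfl | hs0
  · exact zero_le
  have hcard : 1 < Fintype.card ι := by
    exact_mod_cast (NNReal.one_lt_rpow hK (NNReal.coe_pos.2 hs0)).trans_le hs
  have : Nonempty ι := Fintype.card_pos_iff.1 (by lia)
  have hmaps := mapsTo_of_iUnion_image_subset hJ.subset
  obtain ⟨label, shift, h⟩ := exists_isIFSDecoder hJ.superset
  have hlabel (i) (y) (hy : y ∈ J) : label (f i y) = i := h.label_apply hmaps hδ hsep hy
  have hshift (i) (y) (hy : y ∈ J) : shift (f i y) = y :=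
    h.shift_apply hmaps (injOn_iff_injective.2 (hexp i).injective) hy (hlabel i y hy)
  have hholder := h.holderOnWith_addressValue hexp hδ hsep hs
  have hsurj : Icc 0 1 ⊆ addressValue label shift '' J :=
    Icc_subset_image_addressValue hcard
      (hcompact.image_of_continuousOn (hholder.continuousOn hs0)).isClosed
      (exists_forall_lt_label_iterate_eq hne hmaps hlabel hshift)
  have hone : dimH (Icc (0 : ℝ) 1) = 1 := by
    rw [Real.dimH_of_nonempty_interior (by simp), Module.finrank_self, Nat.cast_one]
  have hdiv : 1 ≤ dimH J / s := by
    calc 1 = dimH (Icc (0 : ℝ) 1) := hone.symm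
      _ ≤ dimH (addressValue label shift '' J) := dimH_mono hsurj
      _ ≤ dimH J / s := hholder.dimH_image_le hs0
  rwa [ENNReal.le_div_iff_mul_le (.inl (by positivity)) (.inl ENNReal.coe_ne_top), one_mul] at hdiv

end LowerBound

section Decimation

variable {c x y : ℝ}

/-- Square root of the discriminant of `z (c - z) = x`. As it decreases from `c` to
`discrRoot c c = √(c (c - 4))` on `[0, c]`, the value `discrRoot c c` is also the smallest distance
between the two solutions. -/
noncomputable def discrRoot (c x : ℝ) : ℝ := √(c ^ 2 - 4 * x)

/-- The inverse branch with sign `ε` of the decimation polynomial `x ↦ x (c - x)`, for a real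
parameter `c` in place of `3 + d`. -/
noncomputable def decimationBranch (c : ℝ) (ε : ℤˣ) (x : ℝ) : ℝ := (c + (ε : ℤ) * discrRoot c x) / 2

theorem iUnion_decimationBranch_image (d : ℕ) (J : Set ℝ) :
    ⋃ ε, decimationBranch (3 + d) ε '' J = Sd d (-1) '' J ∪ Sd d 1 '' J := by
  ext z
  simp only [mem_iUnion, mem_union, mem_image, decimationBranch, discrRoot, Sd]
  constructor
  · rintro ⟨ε, x, hx, rfl⟩
    rcases Int.units_eq_one_or ε with rfl | rfl
    · exact .inr ⟨x, hx, by simp⟩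
    · exact .inl ⟨x, hx, by simp⟩
  · rintro (⟨x, hx, rfl⟩ | ⟨x, hx, rfl⟩)
    · exact ⟨-1, x, hx, by simp⟩
    · exact ⟨1, x, hx, by simp⟩

theorem four_lt_of_two_add_sqrt_five_lt (hc : 2 + √5 < c) : 4 < c := by
  have : (2 : ℝ) < √5 := Real.lt_sqrt_of_sq_lt (by norm_num)
  linarith

theorem two_add_sqrt_five_lt {d : ℕ} (hd : 2 ≤ d) : 2 + √5 < 3 + (d : ℝ) := by
  have : √5 < 3 := (Real.sqrt_lt' three_pos).2 (by norm_num)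
  have : (2 : ℝ) ≤ d := by exact_mod_cast hd
  linarith

theorem discrRoot_self_le (hx : x ≤ c) : discrRoot c c ≤ discrRoot c x := by
  unfold discrRoot
  gcongr

theorem discrRoot_le (hc : 0 ≤ c) (hx : 0 ≤ x) : discrRoot c x ≤ c :=
  Real.sqrt_le_iff.2 ⟨hc, by linarith⟩

theorem discrRoot_self_pos (hc : 4 < c) : 0 < discrRoot c c :=
  Real.sqrt_pos.2 (by nlinarith)

theorem one_lt_discrRoot_self (hc : 2 + √5 < c) : 1 < discrRoot c c := by
  refine Real.lt_sqrt_of_sq_lt ?_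
  nlinarith [Real.sq_sqrt (show (0 : ℝ) ≤ 5 by norm_num), Real.sqrt_nonneg 5]

theorem log_discrRoot_self (hc : 4 < c) :
    Real.log (discrRoot c c) = (Real.log c + Real.log (c - 4)) / 2 := by
  rw [← Real.log_mul (by linarith) (by linarith), discrRoot, Real.log_sqrt (by nlinarith)]
  ring_nf

theorem dist_eq_mul_dist_decimationBranch (hc : 4 ≤ c) (hx : x ≤ c) (hy : y ≤ c) (ε : ℤˣ) :
    dist x y = (discrRoot c x + discrRoot c y) / 2 *
      dist (decimationBranch c ε x) (decimationBranch c ε y) := by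
  have hu : discrRoot c x ^ 2 = c ^ 2 - 4 * x := Real.sq_sqrt (by nlinarith)
  have hv : discrRoot c y ^ 2 = c ^ 2 - 4 * y := Real.sq_sqrt (by nlinarith)
  have hmean : 0 ≤ (discrRoot c x + discrRoot c y) / 2 := by unfold discrRoot; positivity
  have hsign : |((ε : ℤ) : ℝ)| = 1 := by rcases Int.units_eq_one_or ε with rfl | rfl <;> simp
  have hbranch : decimationBranch c ε x - decimationBranch c ε y =
      (ε : ℤ) * ((discrRoot c x - discrRoot c y) / 2) := by
    unfold decimationBranch
    ring
  have hfactor : x - y = -((discrRoot c x + discrRoot c y) / 2 *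
      ((discrRoot c x - discrRoot c y) / 2)) := by linear_combination (hu - hv) / 4
  rw [Real.dist_eq, Real.dist_eq, hbranch, hfactor, abs_neg, abs_mul, abs_mul, hsign, one_mul,
    abs_of_nonneg hmean]

theorem discrRoot_self_le_dist_decimationBranch (hx : x ≤ c) (hy : y ≤ c) {ε η : ℤˣ}
    (hne : ε ≠ η) : discrRoot c c ≤ dist (decimationBranch c ε x) (decimationBranch c η y) := by
  have hu := discrRoot_self_le hx
  have hv := discrRoot_self_le hy
  rw [Real.dist_eq, le_abs]
  unfold decimationBranch
  rcases Int.units_eq_one_or ε with rfl | rfl <;> rcases Int.units_eq_one_or η with rfl | rfl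
  · exact absurd rfl hne
  · left; push_cast; linarith
  · right; push_cast; linarith
  · exact absurd rfl hne

theorem lipschitzOnWith_decimationBranch (hc : 4 < c) (ε : ℤˣ) :
    LipschitzOnWith (discrRoot c c)⁻¹.toNNReal (decimationBranch c ε) (Icc 0 c) := by
  have hpos := discrRoot_self_pos hc
  refine LipschitzOnWith.of_dist_le_mul fun x hx y hy => ?_
  rw [Real.coe_toNNReal _ (by positivity), le_inv_mul_iff₀ hpos,
    dist_eq_mul_dist_decimationBranch hc.le hx.2 hy.2 ε]
  gcongr
  linarith [discrRoot_self_le hx.2, discrRoot_self_le hy.2]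

theorem antilipschitzWith_decimationBranch (hc : 4 ≤ c) {J : Set ℝ} (hJ : J ⊆ Icc 0 c) (ε : ℤˣ) :
    AntilipschitzWith c.toNNReal (J.domRestrict (decimationBranch c ε)) := by
  refine AntilipschitzWith.of_le_mul_dist fun ⟨x, hx⟩ ⟨y, hy⟩ => ?_
  rw [Real.coe_toNNReal _ (by linarith), Subtype.dist_eq, domRestrict_apply, domRestrict_apply,
    dist_eq_mul_dist_decimationBranch hc (hJ hx).2 (hJ hy).2 ε]
  gcongr
  linarith [discrRoot_le (by linarith) (hJ hx).1, discrRoot_le (by linarith) (hJ hy).1]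

theorem logb_two_le_dimH_of_decimation (hc : 4 < c) {J : Set ℝ} (hJ : J ⊆ Icc 0 c)
    (hne : J.Nonempty) (hclosed : IsClosed J) (hinv : ⋃ ε, decimationBranch c ε '' J = J) :
    ENNReal.ofReal (Real.logb c 2) ≤ dimH J := by
  have hone : 1 < c := by linarith
  have hcard : c.toNNReal ^ ((Real.logb c 2).toNNReal : ℝ) ≤ Fintype.card ℤˣ := by
    rw [toNNReal_rpow_toNNReal_logb hone one_le_two, Real.toNNReal_ofNat, Fintype.card_units_int,
      Nat.cast_ofNat]
  refine le_dimH_of_antilipschitzWith_of_iUnion_image_eq (Real.one_lt_toNNReal.2 hone)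
    (Real.toNNReal_pos.2 (discrRoot_self_pos hc)).ne' hcard hinv
    (antilipschitzWith_decimationBranch hc.le hJ) (fun ε η hεη x hx y hy => ?_)
    (isCompact_Icc.of_isClosed_subset hclosed hJ) hne
  rw [edist_dist]
  exact ENNReal.ofReal_le_ofReal
    (discrRoot_self_le_dist_decimationBranch (hJ hx).2 (hJ hy).2 hεη)

theorem dimH_le_logb_two_of_decimation (hc : 2 + √5 < c) {J : Set ℝ} (hJ : J ⊆ Icc 0 c)
    (hinv : ⋃ ε, decimationBranch c ε '' J = J) :
    dimH J ≤ ENNReal.ofReal (Real.logb (discrRoot c c) 2) := by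
  have hone := one_lt_discrRoot_self hc
  have hcard : Fintype.card ℤˣ *
      (discrRoot c c)⁻¹.toNNReal ^ ((Real.logb (discrRoot c c) 2).toNNReal : ℝ) ≤ 1 := by
    rw [Real.toNNReal_inv, NNReal.inv_rpow, toNNReal_rpow_toNNReal_logb hone one_le_two,
      Real.toNNReal_ofNat, Fintype.card_units_int, Nat.cast_ofNat, mul_inv_cancel₀ two_ne_zero]
  exact dimH_le_of_lipschitzOnWith_of_iUnion_image_eq
    (Real.toNNReal_lt_one.2 (inv_lt_one_of_one_lt₀ hone)) hcard hinv
    (fun ε => (lipschitzOnWith_decimationBranch (four_lt_of_two_add_sqrt_five_lt hc) ε).mono hJ)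
    ((Metric.isBounded_Icc _ _).subset hJ).ediam_ne_top

theorem logb_discrRoot_self (hc : 4 < c) :
    Real.logb (discrRoot c c) 2 = 2 * Real.log 2 / (Real.log c + Real.log (c - 4)) := by
  rw [Real.logb, log_discrRoot_self hc, div_div_eq_mul_div, mul_comm]

theorem tendsto_logb_discrRoot_self :
    Tendsto (fun c => ENNReal.ofReal (Real.logb (discrRoot c c) 2)) atTop (𝓝 0) := by
  have hlog : Tendsto (fun c => Real.log c + Real.log (c - 4)) atTop atTop :=
    Real.tendsto_log_atTop.atTop_add_atTop
      (Real.tendsto_log_atTop.comp (tendsto_atTop_add_const_right _ (-4) tendsto_id))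
  have hlogb : Tendsto (fun c => Real.logb (discrRoot c c) 2) atTop (𝓝 0) :=
    (tendsto_const_nhds.div_atTop hlog).congr' <|
      (eventually_gt_atTop 4).mono fun c hc => (logb_discrRoot_self hc).symm
  simpa using ENNReal.tendsto_ofReal hlogb

end Decimation

theorem stmt_4_general :
    (∀ c : ℝ, 2 + √5 < c → ∀ J ⊆ Icc 0 c, J.Nonempty → IsClosed J →
      ⋃ ε, decimationBranch c ε '' J = J →
      ENNReal.ofReal (Real.log 2 / Real.log c) ≤ dimH J ∧
        dimH J ≤ ENNReal.ofReal (2 * Real.log 2 / (Real.log c + Real.log (c - 4)))) ∧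
    (∀ {α : Type*} {l : Filter α} {c : α → ℝ} (J : α → Set ℝ), Tendsto c l atTop →
      (∀ᶠ a in l, J a ⊆ Icc 0 (c a) ∧ ⋃ ε, decimationBranch (c a) ε '' J a = J a) →
      Tendsto (fun a => dimH (J a)) l (𝓝 0)) := by
  refine ⟨fun c hc J hJ hne hclosed hinv => ?_, fun {α l c} J hc hinv => ?_⟩
  · have hc4 := four_lt_of_two_add_sqrt_five_lt hc
    rw [← logb_discrRoot_self hc4]
    exact ⟨logb_two_le_dimH_of_decimation hc4 hJ hne hclosed hinv,
      dimH_le_logb_two_of_decimation hc hJ hinv⟩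
  · refine tendsto_of_tendsto_of_tendsto_of_le_of_le' tendsto_const_nhds
      (tendsto_logb_discrRoot_self.comp hc) (.of_forall fun _ => zero_le) ?_
    filter_upwards [hinv, hc.eventually_gt_atTop (2 + √5)] with a ha hca
    exact dimH_le_logb_two_of_decimation hca ha.1 ha.2

theorem stmt_4 :
    (∀ d : ℕ, 2 ≤ d → ∀ J : Set ℝ,
      J ⊆ Set.Icc 0 (3 + (d:ℝ)) → J.Nonempty → IsClosed J →
      J = Sd d (-1) '' J ∪ Sd d 1 '' J →
      (∀ J' : Set ℝ, J' ⊆ Set.Icc 0 (3 + (d:ℝ)) → J'.Nonempty → IsClosed J' →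
        J' = Sd d (-1) '' J' ∪ Sd d 1 '' J' → J ⊆ J') →
      ENNReal.ofReal (Real.log 2 / Real.log ((d:ℝ) + 3)) ≤ dimH J ∧
        dimH J ≤ ENNReal.ofReal
          (2 * Real.log 2 / (Real.log ((d:ℝ) + 3) + Real.log ((d:ℝ) - 1)))) ∧
    (∀ J : ℕ → Set ℝ,
      (∀ d : ℕ, 2 ≤ d →
        (J d ⊆ Set.Icc 0 (3 + (d:ℝ)) ∧ (J d).Nonempty ∧ IsClosed (J d) ∧
          J d = Sd d (-1) '' J d ∪ Sd d 1 '' J d ∧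
          (∀ J' : Set ℝ, J' ⊆ Set.Icc 0 (3 + (d:ℝ)) → J'.Nonempty → IsClosed J' →
            J' = Sd d (-1) '' J' ∪ Sd d 1 '' J' → J d ⊆ J'))) →
      Tendsto (fun d : ℕ => dimH (J d)) atTop (nhds 0)) := by
  refine ⟨fun d hd J hJ hne hclosed hinv _ => ?_, fun J hJ => ?_⟩
  · have hbounds := stmt_4_general.{0}.1 (3 + d) (two_add_sqrt_five_lt hd) J hJ hne hclosed
      ((iUnion_decimationBranch_image d J).trans hinv.symm)
    rwa [show 3 + (d : ℝ) - 4 = d - 1 by ring, add_comm (3 : ℝ)] at hbounds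
  · exact stmt_4_general.{0}.2 J (tendsto_atTop_add_const_left _ 3 tendsto_natCast_atTop_atTop) <|
      (eventually_ge_atTop 2).mono fun d hd => ⟨(hJ d hd).1,
        (iUnion_decimationBranch_image d (J d)).trans (hJ d hd).2.2.2.1.symm⟩
end
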